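/- arXiv:2005.10242 — 4 statements merged into one kernel-verified Lean document; each statement's English description precedes it below -/
import Mathlib

section
/- Let τ > 0, m ≥ 2, and suppose there exists a perfectly uniform encoder, i.e., a Borel measurable f : ℝⁿ → S^{m−1} whose pushforward of p_data equals σ_{m−1}. Then the set of minimizers over all Borel measurable encoders g : ℝⁿ → S^{m−1} of the uniformity term E_{x∼p_data}[log E_{x⁻∼p_data}[e^{g(x⁻)·g(x)/τ}]] is exactly the set of perfectly uniform encoders. -/
open MeasureTheory Real Filter Metric
open scoped RealInnerProductSpace ENNReal Topology BigOperators

noncomputable section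

/-- `ℝ^n` as a Euclidean space. -/
abbrev Euc (n : ℕ) : Type := EuclideanSpace ℝ (Fin n)

/-- The unit sphere in `ℝ^m`; the sphere `S^d` of the informal statement is `Sph (d+1)`. -/
abbrev Sph (m : ℕ) := Metric.sphere (0 : Euc m) 1

/-- The uniform (normalized surface-area) probability measure on the unit sphere of `ℝ^m`. -/
noncomputable def unifSphere (m : ℕ) : Measure (Sph m) :=
  ((volume : Measure (Euc m)).toSphere Set.univ)⁻¹ • (volume : Measure (Euc m)).toSphere

/-- The uniformity term `E_{x∼p_data}[log E_{x⁻∼p_data}[exp(g(x⁻)·g(x)/τ)]]`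
of the limiting contrastive loss. -/
noncomputable def unifTerm {n m : ℕ} (pdata : Measure (Euc n)) (g : Euc n → Sph m) (τ : ℝ) : ℝ :=
  ∫ x, Real.log (∫ x', Real.exp (⟪(g x' : Euc m), (g x : Euc m)⟫ / τ) ∂pdata) ∂pdata


/-! ### Gaussian integral -/

lemma gauss_int {m : ℕ} {b : ℝ} (hb : 0 < b) (w : Euc m) :
    Integrable (fun z : Euc m => Real.exp (-b * ‖z‖ ^ 2 + ⟪w, z⟫)) ∧
    ∫ z : Euc m, Real.exp (-b * ‖z‖ ^ 2 + ⟪w, z⟫) =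
      (π / b) ^ ((m : ℝ) / 2) * Real.exp (‖w‖ ^ 2 / (4 * b)) := by
  have h1 := GaussianFourier.integrable_cexp_neg_mul_sq_norm_add (V := Euc m) (b := (b : ℂ))
    (by simpa using hb) 1 w
  have h2 := GaussianFourier.integral_cexp_neg_mul_sq_norm_add (V := Euc m) (b := (b : ℂ))
    (by simpa using hb) 1 w
  have e : ∀ z : Euc m, Complex.exp (-(b : ℂ) * (‖z‖ : ℂ) ^ 2 + 1 * (⟪w, z⟫ : ℝ)) =
      ((Real.exp (-b * ‖z‖ ^ 2 + ⟪w, z⟫) : ℝ) : ℂ) := by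
    intro z; push_cast; simp
  simp_rw [e] at h1 h2
  constructor
  · have h3 := h1.re
    simp only [Complex.ofReal_re, RCLike.re_eq_complex_re] at h3
    exact h3
  · rw [integral_complex_ofReal] at h2
    have : ((π : ℂ) / b) ^ ((Module.finrank ℝ (Euc m) : ℂ) / 2) *
        Complex.exp (1 ^ 2 * (‖w‖ : ℂ) ^ 2 / (4 * b)) =
        (((π / b) ^ ((m : ℝ) / 2) * Real.exp (‖w‖ ^ 2 / (4 * b)) : ℝ) : ℂ) := by
      rw [Complex.ofReal_mul, Complex.ofReal_cpow (by positivity)]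
      simp
    rw [this] at h2
    exact_mod_cast h2

/-! ### Rotation invariance -/

open Pointwise in
lemma toSphere_map {m : ℕ} (R : Euc m ≃ₗᵢ[ℝ] Euc m) (R' : Sph m → Sph m)
    (hR' : ∀ x, (R' x : Euc m) = R x) (hm : Measurable R') :
    ((volume : Measure (Euc m)).toSphere).map R' = (volume : Measure (Euc m)).toSphere := by
  ext s hs
  rw [Measure.map_apply hm hs, Measure.toSphere_apply' _ (hm hs), Measure.toSphere_apply' _ hs]
  congr 1
  have : Set.Ioo (0 : ℝ) 1 • ((↑) '' (R' ⁻¹' s) : Set (Euc m)) =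
      R ⁻¹' (Set.Ioo (0 : ℝ) 1 • ((↑) '' s : Set (Euc m))) := by
    ext v
    simp only [Set.mem_smul, Set.mem_preimage, Set.mem_image]
    constructor
    · rintro ⟨r, hr, _, ⟨x, hx, rfl⟩, rfl⟩
      exact ⟨r, hr, _, ⟨R' x, hx, rfl⟩, by simp [hR']⟩
    · rintro ⟨r, hr, _, ⟨y, hy, rfl⟩, h⟩
      refine ⟨r, hr, R.symm y, ⟨⟨R.symm y, by simp⟩, ?_, rfl⟩, ?_⟩
      · convert hy using 1
        ext1; simp [hR']
      · apply R.injective; simpa using h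
  rw [this]
  exact R.measurePreserving.measure_preimage_equiv (f := R.toMeasurableEquiv) _

lemma U_const {m : ℕ} (τ : ℝ) (x x' : Sph m) :
    ∫ y : Sph m, Real.exp (⟪(y : Euc m), (x : Euc m)⟫ / τ) ∂(unifSphere m) =
    ∫ y : Sph m, Real.exp (⟪(y : Euc m), (x' : Euc m)⟫ / τ) ∂(unifSphere m) := by
  let R := (Submodule.span ℝ {(x : Euc m) - x'})ᗮ.reflection
  have hR : R x = x' := Submodule.reflection_sub (by simp)
  let R' : Sph m → Sph m := fun y => ⟨R y, by simp⟩
  have hmR : Measurable R' := (R.continuous.comp continuous_subtype_val).subtype_mk _ |>.measurable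
  have hmap : (unifSphere m).map R' = unifSphere m := by
    unfold unifSphere
    rw [Measure.map_smul, toSphere_map R R' (fun _ => rfl) hmR]
  conv_rhs => rw [← hmap]
  rw [integral_map hmR.aemeasurable (by fun_prop)]
  congr 1 with y
  change _ = Real.exp (⟪R y, (x' : Euc m)⟫ / τ)
  rw [← hR, R.inner_map_map]

/-! ### moment generating functions separate measures on the sphere -/

lemma ext_mgf {m : ℕ} (a b : Measure (Sph m)) [IsFiniteMeasure a] [IsFiniteMeasure b]
    (h : ∀ z : Euc m, ∫ x : Sph m, Real.exp ⟪(x : Euc m), z⟫ ∂a =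
      ∫ x : Sph m, Real.exp ⟪(x : Euc m), z⟫ ∂b) : a = b := by
  have hzero : a = 0 ↔ b = 0 := by
    have h0 := h 0
    simp only [inner_zero_right, Real.exp_zero, integral_const, smul_eq_mul, mul_one] at h0
    rw [← Measure.measure_univ_eq_zero, ← Measure.measure_univ_eq_zero,
      ← measureReal_eq_zero_iff, ← measureReal_eq_zero_iff, h0]
  have key : a.map (Subtype.val : Sph m → Euc m) = b.map (Subtype.val : Sph m → Euc m) := by
    apply Measure.ext_of_charFun
    ext z
    rw [charFun_apply, charFun_apply, integral_map (by fun_prop) (by fun_prop),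
      integral_map (by fun_prop) (by fun_prop)]
    let X : Sph m → ℝ := fun x => ⟪(x : Euc m), z⟫
    have hX : Continuous X := by fun_prop
    have hint : ProbabilityTheory.integrableExpSet X a = Set.univ := by
      ext t
      simp only [ProbabilityTheory.integrableExpSet, Set.mem_ofPred_eq, Set.mem_univ, iff_true]
      exact Continuous.integrable_of_hasCompactSupport (by fun_prop)
        (HasCompactSupport.of_compactSpace _)
    have hmgf : ProbabilityTheory.mgf X a = ProbabilityTheory.mgf X b := by
      ext t
      simpa [ProbabilityTheory.mgf, X, inner_smul_right] using h (t • z)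
    have := ProbabilityTheory.eqOn_complexMGF_of_mgf' hmgf hzero
    have := this (x := Complex.I) (by simp [hint])
    simpa [ProbabilityTheory.complexMGF, X, mul_comm] using this
  have he : MeasurableEmbedding (Subtype.val : Sph m → Euc m) :=
    MeasurableEmbedding.subtype_coe isClosed_sphere.measurableSet
  rw [← he.comap_map a, key, he.comap_map]

/-! ### Positive definiteness of the kernel -/

/-- The exponential kernel on the sphere. -/
def kern {m : ℕ} (τ : ℝ) (p : Sph m × Sph m) : ℝ := Real.exp (⟪(p.1 : Euc m), (p.2 : Euc m)⟫ / τ)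

lemma kern_cont {m : ℕ} (τ : ℝ) : Continuous (kern (m := m) τ) := by
  unfold kern; fun_prop

lemma cont_integrable {X : Type*} [TopologicalSpace X] [CompactSpace X] [MeasurableSpace X]
    [OpensMeasurableSpace X] (μ : Measure X) [IsFiniteMeasure μ] {f : X → ℝ}
    (hf : Continuous f) : Integrable f μ := by
  obtain ⟨C, hC⟩ := isCompact_univ.exists_bound_of_continuousOn hf.continuousOn
  refine Integrable.of_bound hf.measurable.aestronglyMeasurable C ?_
  exact Filter.Eventually.of_forall fun x => hC x (Set.mem_univ x)

/-- Moment generating function. -/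
def Mg {m : ℕ} (a : Measure (Sph m)) (z : Euc m) : ℝ := ∫ x : Sph m, Real.exp ⟪(x : Euc m), z⟫ ∂a

lemma Mg_cont {m : ℕ} (a : Measure (Sph m)) [IsFiniteMeasure a] : Continuous (Mg a) := by
  unfold Mg
  have := continuous_parametric_integral_of_continuous (μ := a) (s := Set.univ)
    (f := fun (z : Euc m) (x : Sph m) => Real.exp ⟪(x : Euc m), z⟫) (by fun_prop) isCompact_univ
  simpa using this

lemma Q_rep {m : ℕ} {τ : ℝ} (hτ : 0 < τ) (a b : Measure (Sph m)) [IsFiniteMeasure a]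
    [IsFiniteMeasure b] :
    Integrable (fun z : Euc m => Real.exp (-(τ / 2) * ‖z‖ ^ 2) * (Mg a z * Mg b z)) ∧
    ∫ z : Euc m, Real.exp (-(τ / 2) * ‖z‖ ^ 2) * (Mg a z * Mg b z) =
      ((π / (τ / 2)) ^ ((m : ℝ) / 2) * Real.exp (1 / τ)) * ∫ p, kern τ p ∂(a.prod b) := by
  have hb : 0 < τ / 2 := by positivity
  let f : (Sph m × Sph m) → Euc m → ℝ := fun p z =>
    Real.exp (-(τ / 2) * ‖z‖ ^ 2 + ⟪(p.1 : Euc m) + p.2, z⟫)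
  have hfc : Continuous (Function.uncurry f) := by
    unfold f Function.uncurry; fun_prop
  have hz : ∀ p, ∫ z, f p z =
      ((π / (τ / 2)) ^ ((m : ℝ) / 2) * Real.exp (1 / τ)) * kern τ p := by
    intro p
    unfold f kern
    rw [(gauss_int hb _).2, mul_assoc, ← Real.exp_add]
    congr 2
    rw [norm_add_sq_real]
    simp
    field_simp
    ring
  have hint : Integrable (Function.uncurry f) ((a.prod b).prod volume) := by
    rw [integrable_prod_iff hfc.measurable.aestronglyMeasurable]
    constructor
    · exact Filter.Eventually.of_forall fun p => (gauss_int hb ((p.1 : Euc m) + (p.2 : Euc m))).1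
    · have : (fun p : Sph m × Sph m => ∫ z, ‖Function.uncurry f (p, z)‖) =
          fun p => ((π / (τ / 2)) ^ ((m : ℝ) / 2) * Real.exp (1 / τ)) * kern τ p := by
        ext p
        rw [← hz p]
        congr 1 with z
        exact Real.norm_of_nonneg (Real.exp_pos _).le
      rw [this]
      exact (cont_integrable _ (kern_cont τ)).const_mul _
  have hp : ∀ z, ∫ p, f p z ∂(a.prod b) = Real.exp (-(τ / 2) * ‖z‖ ^ 2) * (Mg a z * Mg b z) := by
    intro z
    unfold Mg
    rw [← integral_prod_mul, ← integral_const_mul]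
    congr 1 with p
    simp only [f]
    rw [inner_add_left, Real.exp_add, Real.exp_add]
  constructor
  · have := hint.integral_prod_right
    refine this.congr (Filter.Eventually.of_forall fun z => ?_)
    exact hp z
  · simp_rw [← hp]
    rw [← integral_integral_swap hint]
    simp_rw [hz]
    rw [integral_const_mul]

lemma posdef {m : ℕ} {τ : ℝ} (hτ : 0 < τ) (a b : Measure (Sph m)) [IsFiniteMeasure a]
    [IsFiniteMeasure b] :
    2 * ∫ p, kern τ p ∂(a.prod b) ≤ ∫ p, kern τ p ∂(a.prod a) + ∫ p, kern τ p ∂(b.prod b) ∧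
    (∫ p, kern τ p ∂(a.prod a) + ∫ p, kern τ p ∂(b.prod b) ≤ 2 * ∫ p, kern τ p ∂(a.prod b) →
      a = b) := by
  obtain ⟨i1, e1⟩ := Q_rep hτ a a
  obtain ⟨i2, e2⟩ := Q_rep hτ b b
  obtain ⟨i3, e3⟩ := Q_rep hτ a b
  set C := (π / (τ / 2)) ^ ((m : ℝ) / 2) * Real.exp (1 / τ) with hC
  have hCpos : 0 < C := by positivity
  let F : Euc m → ℝ := fun z => Real.exp (-(τ / 2) * ‖z‖ ^ 2) * (Mg a z - Mg b z) ^ 2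
  have hFe : F = fun z => (Real.exp (-(τ / 2) * ‖z‖ ^ 2) * (Mg a z * Mg a z) +
      Real.exp (-(τ / 2) * ‖z‖ ^ 2) * (Mg b z * Mg b z)) -
      2 * (Real.exp (-(τ / 2) * ‖z‖ ^ 2) * (Mg a z * Mg b z)) := by
    ext z; simp only [F]; ring
  have hFi : Integrable F := by
    rw [hFe]; exact (i1.add i2).sub (i3.const_mul 2)
  have hFint : ∫ z, F z = C * (∫ p, kern τ p ∂(a.prod a) + ∫ p, kern τ p ∂(b.prod b) -
      2 * ∫ p, kern τ p ∂(a.prod b)) := by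
    have i12 := i1.add i2
    simp only [Pi.add_def] at i12
    rw [hFe, integral_sub i12 (i3.const_mul 2), integral_add i1 i2, integral_const_mul,
      e1, e2, e3]
    ring
  have hF0 : 0 ≤ F := fun z => by simp only [F]; positivity
  have hnn : 0 ≤ ∫ z, F z := integral_nonneg hF0
  constructor
  · rw [hFint] at hnn
    have := nonneg_of_mul_nonneg_right hnn hCpos
    linarith
  · intro hle
    have h0 : ∫ z, F z = 0 := by
      apply le_antisymm _ hnn
      rw [hFint]
      exact mul_nonpos_of_nonneg_of_nonpos hCpos.le (by linarith)
    rw [integral_eq_zero_iff_of_nonneg hF0 hFi] at h0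
    have ca := Mg_cont a
    have cb := Mg_cont b
    have hFc : Continuous F := by unfold F; fun_prop
    have hF : F = 0 := (Continuous.ae_eq_iff_eq volume hFc continuous_zero).1 h0
    apply ext_mgf
    intro z
    have hz : F z = 0 := congrFun hF z
    simp only [F] at hz
    have : (Mg a z - Mg b z) ^ 2 = 0 := by
      rcases mul_eq_zero.1 hz with h | h
      · exact absurd h (Real.exp_pos _).ne'
      · exact h
    have := pow_eq_zero_iff (two_ne_zero) |>.1 this
    unfold Mg at this
    linarith

/-! ### The energy on measures -/

/-- The potential of a measure. -/
def Upot {m : ℕ} (τ : ℝ) (μ : Measure (Sph m)) (x : Sph m) : ℝ :=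
  ∫ y : Sph m, Real.exp (⟪(y : Euc m), (x : Euc m)⟫ / τ) ∂μ

lemma Upot_cont {m : ℕ} (τ : ℝ) (μ : Measure (Sph m)) [IsFiniteMeasure μ] :
    Continuous (Upot τ μ) := by
  unfold Upot
  have := continuous_parametric_integral_of_continuous (μ := μ) (s := Set.univ)
    (f := fun (x : Sph m) (y : Sph m) => Real.exp (⟪(y : Euc m), (x : Euc m)⟫ / τ))
    (by fun_prop) isCompact_univ
  simpa using this

lemma Upot_pos {m : ℕ} (τ : ℝ) (μ : Measure (Sph m)) [IsProbabilityMeasure μ] (x : Sph m) :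
    0 < Upot τ μ x := by
  unfold Upot
  exact integral_exp_pos (cont_integrable μ (by fun_prop))

lemma Upot_eq {m : ℕ} (τ : ℝ) (μ : Measure (Sph m)) (x : Sph m) :
    ∫ y, kern τ (x, y) ∂μ = Upot τ μ x := by
  unfold Upot kern
  congr 1 with y
  rw [real_inner_comm]

lemma energy_main {m : ℕ} {τ : ℝ} (hτ : 0 < τ) (μ : Measure (Sph m)) [IsProbabilityMeasure μ]
    [IsProbabilityMeasure (unifSphere m)] (c : ℝ) (hc : ∀ x, Upot τ (unifSphere m) x = c)
    (hc0 : 0 < c) :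
    Real.log c ≤ ∫ x, Real.log (Upot τ μ x) ∂μ ∧
    (∫ x, Real.log (Upot τ μ x) ∂μ ≤ Real.log c → μ = unifSphere m) := by
  set σ := unifSphere m with hσ
  have hUc := Upot_cont τ μ
  have hUp := Upot_pos τ μ
  let s : Sph m → ℝ := fun x => (Real.sqrt (Upot τ μ x))⁻¹
  have hsp : ∀ x, 0 < s x := fun x => inv_pos.2 (Real.sqrt_pos.2 (hUp x))
  have hsc : Continuous s := hUc.sqrt.inv₀ fun x => (Real.sqrt_pos.2 (hUp x)).ne'
  have hs2 : ∀ x, s x ^ 2 * Upot τ μ x = 1 := by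
    intro x
    simp only [s]
    rw [inv_pow, Real.sq_sqrt (hUp x).le, inv_mul_cancel₀ (hUp x).ne']
  have hlogs : ∀ x, Real.log (Upot τ μ x) = -2 * Real.log (s x) := by
    intro x
    simp only [s]
    rw [Real.log_inv, Real.log_sqrt (hUp x).le]; ring
  have hsi : Integrable s μ := cont_integrable μ hsc
  have hlc : Continuous fun x => Real.log (s x) := hsc.log fun x => (hsp x).ne'
  have hli : Integrable (fun x => Real.log (s x)) μ := cont_integrable μ hlc
  set t := ∫ x, s x ∂μ with ht
  have ht0 : 0 < t := by
    rw [ht, integral_pos_iff_support_of_nonneg (fun x => (hsp x).le) hsi]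
    have : Function.support s = Set.univ := by
      ext x; simp [(hsp x).ne']
    rw [this]; simp
  let a : Measure (Sph m) := μ.withDensity fun x => ENNReal.ofReal (s x)
  have hsm : Measurable fun x => ENNReal.ofReal (s x) := hsc.measurable.ennreal_ofReal
  have : IsFiniteMeasure a := isFiniteMeasure_withDensity_ofReal hsi.2
  let b : Measure (Sph m) := ENNReal.ofReal t • σ
  have : IsFiniteMeasure b := Measure.smul_finite _ ENNReal.ofReal_ne_top
  have haU : a.real Set.univ = t := by
    have h1 : ∫ x, (1 : ℝ) ∂a = t := by
      simp only [a]
      rw [integral_withDensity_eq_integral_toReal_smul hsm (by simp)]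
      simp [ENNReal.toReal_ofReal (hsp _).le, ht]
    simpa using h1
  have hbU : b.real Set.univ = t := by
    simp [b, Measure.real, ht0.le]
  have hQb : ∀ ν : Measure (Sph m), IsFiniteMeasure ν →
      ∫ p, kern τ p ∂(ν.prod b) = ν.real Set.univ * (t * c) := by
    intro ν _
    rw [integral_prod _ (cont_integrable _ (kern_cont τ))]
    have : ∀ x : Sph m, ∫ y, kern τ (x, y) ∂b = t * c := by
      intro x
      simp only [b]
      rw [integral_smul_measure, Upot_eq, hc, ENNReal.toReal_ofReal ht0.le, smul_eq_mul]
    simp [this]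
  have hkc := kern_cont (m := m) τ
  have hk0 : ∀ p : Sph m × Sph m, 0 < kern τ p := fun p => Real.exp_pos _
  have hQa : ∫ p, kern τ p ∂(a.prod a) ≤ 1 := by
    have e1 : ∫ p, kern τ p ∂(a.prod a) = ∫ p, s p.1 * s p.2 * kern τ p ∂(μ.prod μ) := by
      simp only [a]
      rw [prod_withDensity hsm hsm, integral_withDensity_eq_integral_toReal_smul
        (by fun_prop) (Filter.Eventually.of_forall fun p => by
          exact ENNReal.mul_lt_top ENNReal.ofReal_lt_top ENNReal.ofReal_lt_top)]
      congr 1 with p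
      rw [ENNReal.toReal_mul, ENNReal.toReal_ofReal (hsp _).le, ENNReal.toReal_ofReal (hsp _).le,
        smul_eq_mul]
    have i1 : Integrable (fun p : Sph m × Sph m => s p.1 ^ 2 * kern τ p) (μ.prod μ) :=
      cont_integrable _ (by fun_prop)
    have i2 : Integrable (fun p : Sph m × Sph m => s p.2 ^ 2 * kern τ p) (μ.prod μ) :=
      cont_integrable _ (by fun_prop)
    have e2 : ∫ p, s p.1 ^ 2 * kern τ p ∂(μ.prod μ) = 1 := by
      rw [integral_prod _ i1]
      simp only [integral_const_mul, Upot_eq, hs2]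
      simp
    have e3 : ∫ p, s p.2 ^ 2 * kern τ p ∂(μ.prod μ) = 1 := by
      rw [← integral_prod_swap, ← e2]
      congr 1 with p
      simp only [Prod.fst_swap, Prod.snd_swap, kern]
      rw [real_inner_comm]
    have hle : ∫ p, s p.1 * s p.2 * kern τ p ∂(μ.prod μ) ≤
        ∫ p, (1 / 2) * (s p.1 ^ 2 * kern τ p + s p.2 ^ 2 * kern τ p) ∂(μ.prod μ) := by
      apply integral_mono (cont_integrable _ (by fun_prop)) ((i1.add i2).const_mul (1 / 2))
      intro p
      change s p.1 * s p.2 * kern τ p ≤ (1 / 2) * (s p.1 ^ 2 * kern τ p + s p.2 ^ 2 * kern τ p)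
      nlinarith [mul_nonneg (hk0 p).le (sq_nonneg (s p.1 - s p.2))]
    rw [integral_const_mul, integral_add i1 i2, e2, e3] at hle
    rw [e1]
    linarith
  obtain ⟨pd1, pd2⟩ := posdef hτ a b
  rw [hQb a inferInstance, hQb b inferInstance, haU, hbU] at pd1 pd2
  have hct : c * t ^ 2 ≤ 1 := by nlinarith
  have hlogct : Real.log (c * t ^ 2) = Real.log c + 2 * Real.log t := by
    rw [Real.log_mul hc0.ne' (by positivity), Real.log_pow]; norm_num
  have hl1 : Real.log c + 2 * Real.log t ≤ 0 := by
    rw [← hlogct]; exact Real.log_nonpos (by positivity) hct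
  have hF : ∫ x, Real.log (Upot τ μ x) ∂μ = -2 * ∫ x, Real.log (s x) ∂μ := by
    simp_rw [hlogs]; rw [integral_const_mul]
  -- Jensen
  let D : Sph m → ℝ := fun x => (s x / t - 1 + Real.log t) - Real.log (s x)
  have hDi : Integrable D μ := cont_integrable μ (by unfold D; fun_prop)
  have hDeq : ∀ x, D x = s x / t - 1 - Real.log (s x / t) := by
    intro x
    simp only [D]
    rw [Real.log_div (hsp x).ne' ht0.ne']; ring
  have hD0 : 0 ≤ D := by
    intro x
    rw [Pi.zero_apply, hDeq]
    have := Real.log_le_sub_one_of_pos (div_pos (hsp x) ht0)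
    linarith
  have hDint : ∫ x, D x ∂μ = Real.log t - ∫ x, Real.log (s x) ∂μ := by
    simp only [D]
    have i1 : Integrable (fun x => s x / t - 1) μ := cont_integrable μ (by fun_prop)
    have i2 : Integrable (fun x => s x / t - 1 + Real.log t) μ := cont_integrable μ (by fun_prop)
    rw [integral_sub i2 hli, integral_add i1 (integrable_const _),
      integral_sub (hsi.div_const t) (integrable_const _), integral_div, ← ht, div_self ht0.ne']
    simp
  have hDnn : 0 ≤ ∫ x, D x ∂μ := integral_nonneg hD0
  constructor
  · rw [hF]; linarith
  · intro hle
    rw [hF] at hle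
    have h0 : ∫ x, D x ∂μ = 0 := by linarith
    have hct1 : Real.log (c * t ^ 2) = 0 := by rw [hlogct]; linarith
    have hct2 : c * t ^ 2 = 1 := Real.eq_one_of_pos_of_log_eq_zero (by positivity) hct1
    have hab : a = b := pd2 (by nlinarith)
    rw [integral_eq_zero_iff_of_nonneg hD0 hDi] at h0
    have hst : (fun x => ENNReal.ofReal (s x)) =ᵐ[μ] fun _ => ENNReal.ofReal t := by
      filter_upwards [h0] with x hx
      rw [hDeq, Pi.zero_apply] at hx
      by_cases h1 : s x / t = 1
      · rw [div_eq_one_iff_eq ht0.ne'] at h1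
        rw [h1]
      · have := Real.log_lt_sub_one_of_pos (div_pos (hsp x) ht0) h1
        linarith
    have ha : a = ENNReal.ofReal t • μ := by
      simp only [a]
      rw [withDensity_congr_ae hst, withDensity_const]
    ext A hA
    have h2 : a A = b A := by rw [hab]
    rw [ha] at h2
    simp only [b, Measure.smul_apply, smul_eq_mul] at h2
    exact (ENNReal.mul_right_inj (by simpa using ht0) ENNReal.ofReal_ne_top).1 h2

lemma unifTerm_eq {n m : ℕ} (τ : ℝ) (pdata : Measure (Euc n)) [IsProbabilityMeasure pdata]
    (g : Euc n → Sph m) (hg : Measurable g) :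
    unifTerm pdata g τ = ∫ x, Real.log (Upot τ (pdata.map g) x) ∂(pdata.map g) := by
  have : IsProbabilityMeasure (pdata.map g) := Measure.isProbabilityMeasure_map hg.aemeasurable
  have hc : Continuous fun x => Real.log (Upot τ (pdata.map g) x) :=
    (Upot_cont τ _).log fun x => (Upot_pos τ _ x).ne'
  rw [integral_map hg.aemeasurable hc.measurable.aestronglyMeasurable]
  unfold unifTerm Upot
  congr 1 with x
  rw [integral_map hg.aemeasurable]
  exact Continuous.aestronglyMeasurable (by fun_prop)

/-- If a perfectly uniform encoder exists, then the minimizers of the uniformity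
term over all Borel measurable encoders are exactly the perfectly uniform encoders. -/
theorem unifTerm_minimizers_iff_perfectly_uniform {n m : ℕ} (τ : ℝ) (hτ : 0 < τ) (hm : 2 ≤ m)
    (pdata : Measure (Euc n)) [IsProbabilityMeasure pdata]
    (hex : ∃ f : Euc n → Sph m, Measurable f ∧ pdata.map f = unifSphere m) :
    ∀ g : Euc n → Sph m, Measurable g →
      ((∀ h : Euc n → Sph m, Measurable h → unifTerm pdata g τ ≤ unifTerm pdata h τ) ↔
        pdata.map g = unifSphere m) := by
  obtain ⟨f, hf, hfσ⟩ := hex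
  have hσ : IsProbabilityMeasure (unifSphere m) := by
    rw [← hfσ]; exact Measure.isProbabilityMeasure_map hf.aemeasurable
  have hc : ∀ x, Upot τ (unifSphere m) x = Upot τ (unifSphere m) (f 0) := fun x =>
    U_const τ x (f 0)
  have hc0 := Upot_pos τ (unifSphere m) (f 0)
  have hval : ∫ x, Real.log (Upot τ (unifSphere m) x) ∂(unifSphere m) =
      Real.log (Upot τ (unifSphere m) (f 0)) := by
    simp [hc]
  have hmain : ∀ h : Euc n → Sph m, Measurable h → _ := fun h hh =>
    have : IsProbabilityMeasure (pdata.map h) := Measure.isProbabilityMeasure_map hh.aemeasurable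
    energy_main hτ (pdata.map h) _ hc hc0
  intro g hg
  constructor
  · intro hmin
    have h1 := hmin f hf
    rw [unifTerm_eq τ pdata g hg, unifTerm_eq τ pdata f hf, hfσ, hval] at h1
    exact (hmain g hg).2 h1
  · intro hgσ h hh
    rw [unifTerm_eq τ pdata g hg, unifTerm_eq τ pdata h hh, hgσ, hval]
    exact (hmain h hh).1
end
end

section
/- For any fixed τ > 0 there exists a constant C (depending only on τ) such that for every Borel measurable encoder f : ℝⁿ → S^{m−1}, every choice of p_data and p_pos, and every positive integer M, the absolute deviation of the normalized contrastive loss from its limit satisfies |(L_contr(f;τ,M) − log M) − (−(1/τ) E_{(x,y)∼p_pos}[f(x)·f(y)] + E_{x∼p_data}[log E_{x⁻∼p_data}[e^{f(x⁻)·f(x)/τ}]])| ≤ C·M^{−1/2}. -/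
open MeasureTheory Real Filter Metric
open scoped RealInnerProductSpace ENNReal Topology BigOperators

noncomputable section

/-- The contrastive loss `L_contr(f; τ, M)` with `M` i.i.d. negative samples. -/
noncomputable def contrLoss {n m : ℕ} (pdata : Measure (Euc n)) (ppos : Measure (Euc n × Euc n))
    (f : Euc n → Sph m) (τ : ℝ) (M : ℕ) : ℝ :=
  ∫ xy, ∫ xneg : Fin M → Euc n,
      -Real.log
        (Real.exp (⟪(f xy.1 : Euc m), (f xy.2 : Euc m)⟫ / τ) /
          (Real.exp (⟪(f xy.1 : Euc m), (f xy.2 : Euc m)⟫ / τ) +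
            ∑ i : Fin M, Real.exp (⟪(f (xneg i) : Euc m), (f xy.2 : Euc m)⟫ / τ)))
    ∂(Measure.pi fun _ : Fin M => pdata) ∂ppos

lemma abs_log_sub_log_le {c u v : ℝ} (hc : 0 < c) (hu : c ≤ u) (hv : c ≤ v) :
    |Real.log u - Real.log v| ≤ |u - v| / c := by
  have key : ∀ {u v : ℝ}, c ≤ u → c ≤ v → Real.log u - Real.log v ≤ |u - v| / c := by
    intro u v hu hv
    have hu0 : 0 < u := hc.trans_le hu
    have hv0 : 0 < v := hc.trans_le hv
    rw [← Real.log_div hu0.ne' hv0.ne']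
    have h1 := Real.log_le_sub_one_of_pos (div_pos hu0 hv0)
    have h2 : u / v - 1 = (u - v) / v := by field_simp
    have h3 : (u - v) / v ≤ |u - v| / v := by gcongr; exact le_abs_self _
    have h4 : |u - v| / v ≤ |u - v| / c := by gcongr
    linarith
  rw [abs_le]
  have h1 := key hu hv
  have h2 := key hv hu
  rw [abs_sub_comm v u] at h2
  constructor <;> linarith

lemma sample_bound {Ω : Type*} [MeasurableSpace Ω] (μ : Measure Ω) [IsProbabilityMeasure μ]
    (g : Ω → ℝ) (hg : Measurable g) (a : ℝ) (ha : 1 ≤ a) (hga : ∀ x, a⁻¹ ≤ g x)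
    (hgb : ∀ x, g x ≤ a) (s : ℝ) (hsa : Real.exp s ≤ a) (M : ℕ) (hM : 0 < M) :
    |(∫ x : Fin M → Ω, -Real.log (Real.exp s / (Real.exp s + ∑ i, g (x i)))
        ∂(Measure.pi fun _ : Fin M => μ)) - (Real.log M + (-s + Real.log (∫ x, g x ∂μ)))|
      ≤ 2 * a ^ 2 * (M : ℝ) ^ (-(1 / 2) : ℝ) := by
  have ha0 : 0 < a := by linarith
  have hMr : (1 : ℝ) ≤ M := by exact_mod_cast hM
  have hM0 : (0 : ℝ) < M := by linarith
  set ν := ∫ x, g x ∂μ with hν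
  set P := Measure.pi fun _ : Fin M => μ with hP
  have hg0 : ∀ x, 0 < g x := fun x => (inv_pos.2 ha0).trans_le (hga x)
  have hgi : Integrable g μ := by
    refine Integrable.of_bound hg.aestronglyMeasurable a (Eventually.of_forall fun x => ?_)
    rw [Real.norm_eq_abs, abs_of_pos (hg0 x)]; exact hgb x
  have hνl : a⁻¹ ≤ ν := by
    have := integral_mono (integrable_const (μ := μ) a⁻¹) hgi hga
    simpa using this
  have hνu : ν ≤ a := by
    have := integral_mono hgi (integrable_const (μ := μ) a) hgb
    simpa using this
  have hν0 : 0 < ν := (inv_pos.2 ha0).trans_le hνl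
  set S : (Fin M → Ω) → ℝ := fun x => ∑ i, g (x i) with hS
  have hSm : Measurable S := by
    apply Finset.measurable_fun_sum
    intro i _
    exact hg.comp (measurable_pi_apply i)
  have hSl : ∀ x, M * a⁻¹ ≤ S x := by
    intro x
    have := Finset.card_nsmul_le_sum Finset.univ (fun i => g (x i)) a⁻¹ (fun i _ => hga _)
    simpa using this
  have hSu : ∀ x, S x ≤ M * a := by
    intro x
    have := Finset.sum_le_card_nsmul Finset.univ (fun i => g (x i)) a (fun i _ => hgb _)
    simpa using this
  have hMa : 0 < M * a⁻¹ := by positivity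
  have hS0 : ∀ x, 0 < S x := fun x => hMa.trans_le (hSl x)
  have hES : ∫ x, S x ∂P = M * ν := by
    rw [hS, integral_finsetSum]
    · have : ∀ i : Fin M, ∫ x : Fin M → Ω, g (x i) ∂P = ν := fun i =>
        integral_comp_eval (μ := fun _ : Fin M => μ) (i := i) hg.aestronglyMeasurable
      simp [this]
    · intro i _
      exact integrable_comp_eval (μ := fun _ : Fin M => μ) (i := i) hgi
  have hgL : MemLp g 2 μ := by
    refine MemLp.of_bound hg.aestronglyMeasurable a (Eventually.of_forall fun x => ?_)
    rw [Real.norm_eq_abs, abs_of_pos (hg0 x)]; exact hgb x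
  have hvar : ∫ x, (S x - M * ν) ^ 2 ∂P ≤ M * a ^ 2 := by
    have h1 := ProbabilityTheory.variance_eq_integral (μ := P) hSm.aemeasurable
    rw [hES] at h1
    rw [← h1]
    have h2 := ProbabilityTheory.variance_sum_pi (μ := fun _ : Fin M => μ)
      (X := fun _ => g) (fun _ => hgL)
    have h3 : (∑ i : Fin M, fun ω : Fin M → Ω => g (ω i)) = S := by
      ext x; simp [hS]
    rw [h3] at h2
    rw [h2]
    have h4 := ProbabilityTheory.variance_le_sq_of_bounded (μ := μ) (X := g) (a := 0) (b := a)
      (Eventually.of_forall fun x => ⟨(hg0 x).le, hgb x⟩) hg.aemeasurable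
    simp only [Finset.sum_const, Finset.card_univ, Fintype.card_fin, nsmul_eq_mul]
    gcongr
    nlinarith
  have hdi : Integrable (fun x => (S x - M * ν) ^ 2) P := by
    refine Integrable.of_bound (C := (2 * (M * a)) ^ 2)
      ((hSm.sub_const _).pow_const 2).aestronglyMeasurable
      (Eventually.of_forall fun x => ?_)
    rw [Real.norm_eq_abs, abs_pow]
    gcongr
    have := hSu x
    have := hS0 x
    have : M * ν ≤ M * a := by gcongr
    have : 0 < M * ν := by positivity
    rw [abs_le]; constructor <;> linarith
  set r := Real.sqrt M with hr
  have hrr : r * r = M := Real.mul_self_sqrt hM0.le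
  have hr0 : 0 < r := Real.sqrt_pos.2 hM0
  have hr1 : 1 ≤ r := by nlinarith
  have hpow : (M : ℝ) ^ (-(1 / 2) : ℝ) = r⁻¹ := by
    rw [Real.rpow_neg hM0.le, hr, Real.sqrt_eq_rpow]
  set B : (Fin M → Ω) → ℝ := fun x => a / M * (a + a * r / 2) + (1 / (2 * r * M)) * (S x - M * ν) ^ 2
    with hB
  have hBi : Integrable B P := (integrable_const _).add (hdi.const_mul _)
  have heq : ∀ x, -Real.log (Real.exp s / (Real.exp s + S x)) = -s + Real.log (Real.exp s + S x) := by
    intro x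
    have := hS0 x
    rw [Real.log_div (by positivity) (by positivity), Real.log_exp]; ring
  have hpt : ∀ x, |(-Real.log (Real.exp s / (Real.exp s + S x)))
      - (Real.log M + (-s + Real.log ν))| ≤ B x := by
    intro x
    rw [heq]
    have h1 : (-s + Real.log (Real.exp s + S x)) - (Real.log M + (-s + Real.log ν))
        = Real.log (Real.exp s + S x) - Real.log (M * ν) := by
      rw [Real.log_mul hM0.ne' hν0.ne']; ring
    rw [h1]
    have hes := Real.exp_pos s
    refine (abs_log_sub_log_le hMa (by linarith [hSl x]) (by gcongr)).trans ?_
    have h2 : |Real.exp s + S x - M * ν| ≤ a + |S x - M * ν| := by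
      have := abs_add_le (Real.exp s) (S x - M * ν)
      rw [abs_of_pos hes] at this
      rw [add_sub_assoc]; linarith
    have h3 : |S x - M * ν| ≤ ((S x - M * ν) ^ 2 / (a * r) + a * r) / 2 := by
      rw [← sq_abs (S x - M * ν)]
      generalize |S x - M * ν| = w
      have har : 0 < a * r := by positivity
      have : (w ^ 2 / (a * r) + a * r) / 2 - w = (w - a * r) ^ 2 / (2 * (a * r)) := by
        field_simp; ring
      have : 0 ≤ (w - a * r) ^ 2 / (2 * (a * r)) := by positivity
      linarith
    have h4 : |Real.exp s + S x - M * ν| ≤ a + ((S x - M * ν) ^ 2 / (a * r) + a * r) / 2 := by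
      linarith
    calc |Real.exp s + S x - M * ν| / (M * a⁻¹)
        ≤ (a + ((S x - M * ν) ^ 2 / (a * r) + a * r) / 2) / (M * a⁻¹) := by gcongr
      _ = B x := by
        simp only [hB]; field_simp; ring
  have hFm : Measurable fun x => -Real.log (Real.exp s / (Real.exp s + S x)) := by fun_prop
  have hdiff : Integrable (fun x => (-Real.log (Real.exp s / (Real.exp s + S x)))
      - (Real.log M + (-s + Real.log ν))) P :=
    hBi.mono' (hFm.sub_const _).aestronglyMeasurable (Eventually.of_forall hpt)
  have hFi : Integrable (fun x => -Real.log (Real.exp s / (Real.exp s + S x))) P := by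
    have := hdiff.add (integrable_const (Real.log M + (-s + Real.log ν)))
    refine this.congr (Eventually.of_forall fun x => ?_)
    simp
  have h5 : (∫ x, -Real.log (Real.exp s / (Real.exp s + S x)) ∂P)
      - (Real.log M + (-s + Real.log ν))
      = ∫ x, ((-Real.log (Real.exp s / (Real.exp s + S x)))
      - (Real.log M + (-s + Real.log ν))) ∂P := by
    rw [integral_sub hFi (integrable_const _)]; simp
  rw [h5]
  rw [← Real.norm_eq_abs]
  refine (norm_integral_le_of_norm_le hBi (Eventually.of_forall fun x => ?_)).trans ?_
  · rw [Real.norm_eq_abs]; exact hpt x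
  rw [hB, integral_add (integrable_const _) (hdi.const_mul _)]
  simp only [integral_const, probReal_univ, one_smul]
  rw [integral_const_mul]
  have h6 : (1 / (2 * r * M)) * ∫ x, (S x - M * ν) ^ 2 ∂P ≤ (1 / (2 * r * M)) * (M * a ^ 2) := by
    gcongr
  refine (add_le_add_right h6 _).trans ?_
  rw [hpow, ← hrr]
  have h7 : a / (r * r) * (a + a * r / 2) + 1 / (2 * r * (r * r)) * (r * r * a ^ 2)
      = a ^ 2 * r⁻¹ * (r⁻¹ + 1) := by
    field_simp; ring
  rw [h7]
  have h8 : r⁻¹ ≤ 1 := inv_le_one_of_one_le₀ hr1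
  have h9 : 0 ≤ a ^ 2 * r⁻¹ := by positivity
  nlinarith

/-- For fixed `τ > 0` there is a constant `C` (depending only on `τ`) bounding,
uniformly in the encoder, the data distributions and `M ≥ 1`, the deviation of the normalized
contrastive loss from its `M → ∞` limit by `C · M^{−1/2}`. -/
theorem contrLoss_deviation_le_inv_sqrt (τ : ℝ) (hτ : 0 < τ) :
    ∃ C : ℝ, ∀ (n m : ℕ) (pdata : Measure (Euc n)) (ppos : Measure (Euc n × Euc n)),
      IsProbabilityMeasure pdata → IsProbabilityMeasure ppos →
      ppos.map Prod.swap = ppos → ppos.map Prod.fst = pdata → ppos.map Prod.snd = pdata →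
      ∀ f : Euc n → Sph m, Measurable f → ∀ M : ℕ, 0 < M →
        |(contrLoss pdata ppos f τ M - Real.log M) -
            (-(1 / τ) * (∫ xy, ⟪(f xy.1 : Euc m), (f xy.2 : Euc m)⟫ ∂ppos) +
              ∫ x, Real.log (∫ x', Real.exp (⟪(f x' : Euc m), (f x : Euc m)⟫ / τ) ∂pdata) ∂pdata)| ≤
          C * (M : ℝ) ^ (-(1 / 2) : ℝ) := by
  refine ⟨2 * (Real.exp (1 / τ)) ^ 2, ?_⟩
  intro n m pdata ppos hpd hpp _ _ hsnd f hf M hM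
  have hab : ∀ x y, |⟪(f x : Euc m), (f y : Euc m)⟫| ≤ 1 := by
    intro x y
    have := abs_real_inner_le_norm (f x : Euc m) (f y : Euc m)
    simpa using this
  have hfm : Measurable fun x => (f x : Euc m) := measurable_subtype_coe.comp hf
  have ha : 1 ≤ Real.exp (1 / τ) := Real.one_le_exp (by positivity)
  have hub : ∀ x y, Real.exp (⟪(f x : Euc m), (f y : Euc m)⟫ / τ) ≤ Real.exp (1 / τ) := by
    intro x y
    apply Real.exp_le_exp.2
    gcongr
    exact (abs_le.1 (hab x y)).2
  have hlb : ∀ x y, (Real.exp (1 / τ))⁻¹ ≤ Real.exp (⟪(f x : Euc m), (f y : Euc m)⟫ / τ) := by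
    intro x y
    rw [← Real.exp_neg, ← neg_div]
    apply Real.exp_le_exp.2
    gcongr
    exact (abs_le.1 (hab x y)).1
  have hgm : ∀ y, Measurable fun x => Real.exp (⟪(f x : Euc m), (f y : Euc m)⟫ / τ) := by
    intro y
    fun_prop
  set ν : Euc n → ℝ := fun y => ∫ x', Real.exp (⟪(f x' : Euc m), (f y : Euc m)⟫ / τ) ∂pdata with hν
  have hgi : ∀ y, Integrable (fun x => Real.exp (⟪(f x : Euc m), (f y : Euc m)⟫ / τ)) pdata := by
    intro y
    refine Integrable.of_bound (hgm y).aestronglyMeasurable (Real.exp (1 / τ))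
      (Eventually.of_forall fun x => ?_)
    rw [Real.norm_eq_abs, abs_of_pos (Real.exp_pos _)]; exact hub x y
  have hνl : ∀ y, (Real.exp (1 / τ))⁻¹ ≤ ν y := by
    intro y
    have := integral_mono (integrable_const (μ := pdata) (Real.exp (1 / τ))⁻¹) (hgi y)
      (fun x => hlb x y)
    simpa using this
  have hνu : ∀ y, ν y ≤ Real.exp (1 / τ) := by
    intro y
    have := integral_mono (hgi y) (integrable_const (μ := pdata) (Real.exp (1 / τ)))
      (fun x => hub x y)
    simpa using this
  have hνm : Measurable ν := by
    have : Measurable (Function.uncurry fun y x => Real.exp (⟪(f x : Euc m), (f y : Euc m)⟫ / τ)) := by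
      unfold Function.uncurry
      fun_prop
    exact (this.stronglyMeasurable.integral_prod_right (ν := pdata)).measurable
  have hlog : ∀ y, |Real.log (ν y)| ≤ 1 / τ := by
    intro y
    have h0 : 0 < ν y := (inv_pos.2 (Real.exp_pos _)).trans_le (hνl y)
    have h1 := Real.log_le_log h0 (hνu y)
    have h2 := Real.log_le_log (inv_pos.2 (Real.exp_pos _)) (hνl y)
    rw [Real.log_exp] at h1
    rw [Real.log_inv, Real.log_exp] at h2
    exact abs_le.2 ⟨h2, h1⟩
  have hlogm : Measurable fun y => Real.log (ν y) := hνm.log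
  have hinm : Measurable fun xy : Euc n × Euc n => ⟪(f xy.1 : Euc m), (f xy.2 : Euc m)⟫ := by
    fun_prop
  have hini : Integrable (fun xy : Euc n × Euc n => ⟪(f xy.1 : Euc m), (f xy.2 : Euc m)⟫) ppos :=
    Integrable.of_bound hinm.aestronglyMeasurable 1 (Eventually.of_forall fun xy => hab _ _)
  have hlogi : Integrable (fun xy : Euc n × Euc n => Real.log (ν xy.2)) ppos :=
    Integrable.of_bound (hlogm.comp measurable_snd).aestronglyMeasurable (1 / τ)
      (Eventually.of_forall fun xy => hlog _)
  have hmapi : ∫ x, Real.log (ν x) ∂pdata = ∫ xy, Real.log (ν xy.2) ∂ppos := by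
    conv_lhs => rw [← hsnd]
    exact integral_map measurable_snd.aemeasurable hlogm.aestronglyMeasurable
  rw [hmapi]
  unfold contrLoss
  set F : Euc n × Euc n → ℝ := fun xy => ∫ xneg : Fin M → Euc n,
      -Real.log
        (Real.exp (⟪(f xy.1 : Euc m), (f xy.2 : Euc m)⟫ / τ) /
          (Real.exp (⟪(f xy.1 : Euc m), (f xy.2 : Euc m)⟫ / τ) +
            ∑ i : Fin M, Real.exp (⟪(f (xneg i) : Euc m), (f xy.2 : Euc m)⟫ / τ)))
    ∂(Measure.pi fun _ : Fin M => pdata) with hF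
  set H : Euc n × Euc n → ℝ := fun xy =>
    Real.log M + (-(⟪(f xy.1 : Euc m), (f xy.2 : Euc m)⟫ / τ) + Real.log (ν xy.2)) with hH
  have hFm : Measurable F := by
    have : Measurable (Function.uncurry fun (xy : Euc n × Euc n) (xneg : Fin M → Euc n) =>
      -Real.log
        (Real.exp (⟪(f xy.1 : Euc m), (f xy.2 : Euc m)⟫ / τ) /
          (Real.exp (⟪(f xy.1 : Euc m), (f xy.2 : Euc m)⟫ / τ) +
            ∑ i : Fin M, Real.exp (⟪(f (xneg i) : Euc m), (f xy.2 : Euc m)⟫ / τ)))) := by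
      unfold Function.uncurry
      fun_prop
    exact (this.stronglyMeasurable.integral_prod_right
      (ν := Measure.pi fun _ : Fin M => pdata)).measurable
  have hHi : Integrable H ppos :=
    (integrable_const _).add ((hini.div_const τ).neg.add hlogi)
  have hbd : ∀ xy, ‖F xy - H xy‖ ≤ 2 * (Real.exp (1 / τ)) ^ 2 * (M : ℝ) ^ (-(1 / 2) : ℝ) := by
    intro xy
    exact sample_bound pdata _ (hgm xy.2) (Real.exp (1 / τ)) ha (fun x => hlb x xy.2)
      (fun x => hub x xy.2) _ (hub xy.1 xy.2) M hM
  have hFHi : Integrable (fun xy => F xy - H xy) ppos :=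
    Integrable.of_bound (hFm.aestronglyMeasurable.sub hHi.aestronglyMeasurable) _
      (Eventually.of_forall hbd)
  have hFi : Integrable F ppos := by
    refine (hFHi.add hHi).congr (Eventually.of_forall fun x => ?_)
    simp
  have hHint : ∫ xy, H xy ∂ppos = Real.log M +
      (-(1 / τ) * (∫ xy, ⟪(f xy.1 : Euc m), (f xy.2 : Euc m)⟫ ∂ppos) +
        ∫ xy, Real.log (ν xy.2) ∂ppos) := by
    have hn : Integrable (fun xy : Euc n × Euc n =>
        -(⟪(f xy.1 : Euc m), (f xy.2 : Euc m)⟫ / τ)) ppos := (hini.div_const τ).neg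
    have hs : Integrable (fun xy : Euc n × Euc n =>
        -(⟪(f xy.1 : Euc m), (f xy.2 : Euc m)⟫ / τ) + Real.log (ν xy.2)) ppos := hn.add hlogi
    simp only [hH]
    rw [integral_add (integrable_const _) hs, integral_add hn hlogi, integral_neg, integral_div]
    simp only [integral_const, probReal_univ, one_smul]
    ring
  have hfin : (∫ xy, F xy ∂ppos) - Real.log M -
      (-(1 / τ) * (∫ xy, ⟪(f xy.1 : Euc m), (f xy.2 : Euc m)⟫ ∂ppos) +
        ∫ xy, Real.log (ν xy.2) ∂ppos) = ∫ xy, (F xy - H xy) ∂ppos := by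
    rw [integral_sub hFi hHi, hHint]; ring
  rw [hfin]
  have := norm_integral_le_of_norm_le_const (μ := ppos) (Eventually.of_forall hbd)
  simpa using this
end
end

section
/- Let d ≥ 1 and t > 0. For every Borel probability measure μ on S^d, the Gaussian energy satisfies I_{G_t}[μ] ≥ e^{−2t} · ₀F₁(;(d+1)/2; t²), with equality if and only if μ = σ_d (as measures on the Borel subsets of S^d). -/
open MeasureTheory Real Filter Metric
open scoped RealInnerProductSpace ENNReal Topology BigOperators

noncomputable section

/-- Gaussian energy `I_{G_t}[μ] = ∫∫ exp(−t‖u−v‖²) dμ dμ` of a measure on the sphere. -/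
noncomputable def gaussEnergy (t : ℝ) {m : ℕ} (μ : Measure (Sph m)) : ℝ :=
  ∫ u, ∫ v, Real.exp (-t * ‖(u : Euc m) - (v : Euc m)‖ ^ 2) ∂μ ∂μ

/-- Confluent hypergeometric limit function `₀F₁(; α; z) = Σ_n zⁿ/((α)_n n!)`. -/
noncomputable def hyp0F1 (α z : ℝ) : ℝ :=
  ∑' k : ℕ, z ^ k / ((ascPochhammer ℝ k).eval α * (Nat.factorial k : ℝ))


lemma aux_polar (m : ℕ) (hm : 0 < m) (u : Euc m) (n : ℕ) :
    ∫ x : Euc m, (inner ℝ u x) ^ n * Real.exp (-‖x‖ ^ 2) =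
      (∫ v : Sph m, (inner ℝ u (v : Euc m)) ^ n ∂(volume : Measure (Euc m)).toSphere) *
        ∫ r in Set.Ioi (0 : ℝ), r ^ (m - 1) * (r ^ n * Real.exp (-r ^ 2)) := by
  have : Nonempty (Fin m) := ⟨⟨0, hm⟩⟩
  have hdim : Module.finrank ℝ (Euc m) = m := by simp
  calc
    _ = ∫ x : ({(0)}ᶜ : Set (Euc m)), (inner ℝ u x.1) ^ n * Real.exp (-‖x.1‖ ^ 2)
          ∂((volume : Measure (Euc m)).comap (↑)) := by
      rw [integral_subtype_comap (measurableSet_singleton _).compl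
        fun x : Euc m ↦ (inner ℝ u x) ^ n * Real.exp (-‖x‖ ^ 2), restrict_compl_singleton]
    _ = ∫ p, (inner ℝ u (p.1 : Euc m)) ^ n * ((p.2 : ℝ) ^ n * Real.exp (-(p.2 : ℝ) ^ 2))
          ∂(volume : Measure (Euc m)).toSphere.prod (.volumeIoiPow (m - 1)) := by
      have := (volume : Measure (Euc m)).measurePreserving_homeomorphUnitSphereProd.integral_comp
        (Homeomorph.measurableEmbedding _)
        (fun p => (inner ℝ u (p.1 : Euc m)) ^ n * ((p.2 : ℝ) ^ n * Real.exp (-(p.2 : ℝ) ^ 2)))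
      rw [hdim] at this
      rw [← this]
      congr 1
      ext x
      have hx : ‖x.1‖ ≠ 0 := norm_ne_zero_iff.2 x.2
      simp only [homeomorphUnitSphereProd_apply_fst_coe, homeomorphUnitSphereProd_apply_snd_coe,
        inner_smul_right]
      rw [← mul_assoc, ← mul_pow]
      congr 2
      field_simp
    _ = (∫ v : Sph m, (inner ℝ u (v : Euc m)) ^ n ∂(volume : Measure (Euc m)).toSphere) *
        ∫ r : Set.Ioi (0 : ℝ), ((r : ℝ) ^ n * Real.exp (-(r : ℝ) ^ 2))
          ∂(Measure.volumeIoiPow (m - 1)) :=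
      integral_prod_mul (fun v : Sph m => (inner ℝ u (v : Euc m)) ^ n)
        (fun r : Set.Ioi (0 : ℝ) => ((r : ℝ) ^ n * Real.exp (-(r : ℝ) ^ 2)))
    _ = _ := by
      congr 1
      simp only [Measure.volumeIoiPow]
      rw [integral_withDensity_eq_integral_toReal_smul (by fun_prop) (by simp),
        ← integral_subtype_comap measurableSet_Ioi
          (fun r : ℝ => r ^ (m - 1) * (r ^ n * Real.exp (-r ^ 2)))]
      congr 1
      ext r
      rw [ENNReal.toReal_ofReal (pow_nonneg r.2.out.le _), smul_eq_mul]

lemma aux_radial (a : ℕ) :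
    ∫ r in Set.Ioi (0 : ℝ), r ^ a * Real.exp (-r ^ 2) = Real.Gamma (((a : ℝ) + 1) / 2) / 2 := by
  have h := integral_rpow_mul_exp_neg_rpow (p := 2) (q := a) (by norm_num)
    (by have : (0 : ℝ) ≤ a := a.cast_nonneg
        linarith)
  simp only [Real.rpow_natCast, Real.rpow_ofNat] at h
  rw [h]; ring

lemma aux_line_even (k : ℕ) :
    ∫ x : ℝ, x ^ (2 * k) * Real.exp (-x ^ 2) = Real.Gamma ((k : ℝ) + 1 / 2) := by
  have h := integral_comp_abs (f := fun x : ℝ => x ^ (2 * k) * Real.exp (-x ^ 2))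
  simp only [pow_mul, sq_abs] at h
  simp only [pow_mul]
  rw [h]
  simp only [← pow_mul]
  rw [aux_radial]
  push_cast
  rw [mul_div_cancel₀ _ (by norm_num)]
  congr 1; ring

lemma aux_line_odd (k : ℕ) :
    ∫ x : ℝ, x ^ (2 * k + 1) * Real.exp (-x ^ 2) = 0 := by
  have h := integral_neg_eq_self (fun x : ℝ => x ^ (2 * k + 1) * Real.exp (-x ^ 2)) volume
  have e : (fun x : ℝ => (-x) ^ (2 * k + 1) * Real.exp (-(-x) ^ 2)) =
      fun x : ℝ => -(x ^ (2 * k + 1) * Real.exp (-x ^ 2)) := by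
    ext x
    rw [Odd.neg_pow ⟨k, rfl⟩, neg_sq]; ring
  rw [e, integral_neg] at h
  linarith

lemma aux_basis (m : ℕ) (u : Euc (m + 1)) (hu : ‖u‖ = 1) :
    ∃ b : OrthonormalBasis (Fin (m + 1)) ℝ (Euc (m + 1)), b 0 = u := by
  have hv : Orthonormal ℝ (({0} : Set (Fin (m + 1))).domRestrict (fun _ => u)) := by
    constructor
    · intro i; simpa using hu
    · intro i j hij
      exact absurd (Subsingleton.elim i j) hij
  obtain ⟨b, hb⟩ := hv.exists_orthonormalBasis_extension_of_card_eq (by simp)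
  exact ⟨b, hb 0 (by simp)⟩

lemma aux_gaussmoment (m : ℕ) (u : Euc (m + 1)) (hu : ‖u‖ = 1) (n : ℕ) :
    ∫ x : Euc (m + 1), (inner ℝ u x) ^ n * Real.exp (-‖x‖ ^ 2) =
      (∫ x : ℝ, x ^ n * Real.exp (-x ^ 2)) * (∫ x : ℝ, Real.exp (-x ^ 2)) ^ m := by
  obtain ⟨b, rfl⟩ := aux_basis m u hu
  have h1 := b.measurePreserving_repr.integral_comp
    b.repr.toHomeomorph.measurableEmbedding
    (fun y : Euc (m + 1) => (y 0) ^ n * Real.exp (-‖y‖ ^ 2))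
  simp only [LinearIsometryEquiv.norm_map, OrthonormalBasis.repr_apply_apply] at h1
  rw [h1, ← (PiLp.volume_preserving_toLp (Fin (m + 1))).integral_comp
    (MeasurableEquiv.toLp 2 _).measurableEmbedding]
  have e : ∀ y : Fin (m + 1) → ℝ, ((WithLp.toLp 2 y : Euc (m + 1)) 0) ^ n *
      Real.exp (-‖(WithLp.toLp 2 y : Euc (m + 1))‖ ^ 2) =
      ∏ i, (Fin.cons (fun x : ℝ => x ^ n * Real.exp (-x ^ 2))
        (fun _ (x : ℝ) => Real.exp (-x ^ 2)) : Fin (m + 1) → ℝ → ℝ) i (y i) := by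
    intro y
    rw [EuclideanSpace.real_norm_sq_eq, Fin.prod_univ_succ, Fin.sum_univ_succ, neg_add,
      Real.exp_add, ← Finset.sum_neg_distrib, Real.exp_sum]
    simp [mul_assoc]
  simp_rw [e]
  rw [integral_fintype_prod_volume_eq_prod, Fin.prod_univ_succ]
  simp

lemma aux_gamma_poch (a : ℝ) (ha : 0 < a) (k : ℕ) :
    Real.Gamma (a + k) = (ascPochhammer ℝ k).eval a * Real.Gamma a := by
  induction k with
  | zero => simp
  | succ k ih =>
    push_cast
    rw [← add_assoc, Real.Gamma_add_one (by positivity), ih, ascPochhammer_succ_eval]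
    ring

lemma aux_half_poch (k : ℕ) :
    ((2 * k).factorial : ℝ) = 4 ^ k * (k.factorial : ℝ) * (ascPochhammer ℝ k).eval (1 / 2) := by
  induction k with
  | zero => simp
  | succ k ih =>
    rw [show 2 * (k + 1) = 2 * k + 1 + 1 by ring, Nat.factorial_succ, Nat.factorial_succ,
      ascPochhammer_succ_eval, Nat.factorial_succ]
    push_cast
    rw [ih]
    ring

lemma aux_poch_pos (a : ℝ) (ha : 0 < a) (k : ℕ) : 0 < (ascPochhammer ℝ k).eval a :=
  ascPochhammer_pos k a ha

/-- Relation between sphere moments and one-dimensional Gaussian moments. -/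
lemma aux_sphere_rel (m : ℕ) (u : Euc (m + 1)) (hu : ‖u‖ = 1) (n : ℕ) :
    (∫ v : Sph (m + 1), (inner ℝ u (v : Euc (m + 1))) ^ n
        ∂(volume : Measure (Euc (m + 1))).toSphere) *
        (Real.Gamma (((m : ℝ) + 1) / 2 + n / 2) / 2) =
      (∫ x : ℝ, x ^ n * Real.exp (-x ^ 2)) * (∫ x : ℝ, Real.exp (-x ^ 2)) ^ m := by
  rw [← aux_gaussmoment m u hu n, aux_polar (m + 1) (by omega) u n]
  congr 1
  simp only [← mul_assoc, ← pow_add]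
  rw [aux_radial]
  push_cast
  congr 2
  ring

lemma aux_sphere_total_pos (m : ℕ) :
    0 < (volume : Measure (Euc (m + 1))).toSphere.real Set.univ := by
  rw [measureReal_def]
  refine ENNReal.toReal_pos ?_ (measure_ne_top _ _)
  rw [Ne, Measure.measure_univ_eq_zero]
  exact Measure.toSphere_ne_zero _

lemma aux_integral_unif (m : ℕ) (f : Sph (m + 1) → ℝ) :
    ∫ v, f v ∂(unifSphere (m + 1)) =
      ((volume : Measure (Euc (m + 1))).toSphere.real Set.univ)⁻¹ *
        ∫ v, f v ∂(volume : Measure (Euc (m + 1))).toSphere := by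
  rw [unifSphere, integral_smul_measure, ENNReal.toReal_inv, smul_eq_mul, measureReal_def]

instance aux_unif_prob (m : ℕ) : IsProbabilityMeasure (unifSphere (m + 1)) := by
  constructor
  rw [unifSphere, Measure.smul_apply, smul_eq_mul]
  refine ENNReal.inv_mul_cancel ?_ (measure_ne_top _ _)
  rw [Ne, Measure.measure_univ_eq_zero]
  exact Measure.toSphere_ne_zero _

lemma aux_moment_odd (m : ℕ) (u : Euc (m + 1)) (hu : ‖u‖ = 1) (k : ℕ) :
    ∫ v : Sph (m + 1), (inner ℝ u (v : Euc (m + 1))) ^ (2 * k + 1) ∂(unifSphere (m + 1)) = 0 := by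
  have h := aux_sphere_rel m u hu (2 * k + 1)
  rw [aux_line_odd, zero_mul] at h
  have hG : Real.Gamma (((m : ℝ) + 1) / 2 + (2 * k + 1 : ℕ) / 2) / 2 ≠ 0 :=
    (div_pos (Real.Gamma_pos_of_pos (by positivity)) two_pos).ne'
  rw [aux_integral_unif, (mul_eq_zero.1 h).resolve_right hG, mul_zero]

lemma aux_moment_even (m : ℕ) (u : Euc (m + 1)) (hu : ‖u‖ = 1) (k : ℕ) :
    ∫ v : Sph (m + 1), (inner ℝ u (v : Euc (m + 1))) ^ (2 * k) ∂(unifSphere (m + 1)) =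
      (ascPochhammer ℝ k).eval (1 / 2) / (ascPochhammer ℝ k).eval (((m : ℝ) + 1) / 2) := by
  have h := aux_sphere_rel m u hu (2 * k)
  have h0 := aux_sphere_rel m u hu (2 * 0)
  have ha : (0 : ℝ) < ((m : ℝ) + 1) / 2 := by positivity
  have hA := aux_sphere_total_pos m
  rw [aux_line_even] at h h0
  have e : (((2 * k : ℕ) : ℝ) / 2) = k := by push_cast; ring
  rw [e, aux_gamma_poch _ ha, add_comm (k : ℝ), aux_gamma_poch _ (by norm_num)] at h
  simp only [mul_zero, pow_zero, integral_const, smul_eq_mul, mul_one, Nat.cast_zero, zero_div,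
    add_zero, zero_add] at h0
  rw [aux_integral_unif]
  have hP := aux_poch_pos _ ha k
  have hG := Real.Gamma_pos_of_pos ha
  rw [mul_assoc, ← h0] at h
  rw [eq_div_iff hP.ne', inv_mul_eq_div, div_mul_eq_mul_div, div_eq_iff hA.ne']
  have := mul_right_cancel₀ (b := Real.Gamma (((m : ℝ) + 1) / 2) / 2) (by positivity)
    (a := (∫ v : Sph (m + 1), (inner ℝ u (v : Euc (m + 1))) ^ (2 * k)
        ∂(volume : Measure (Euc (m + 1))).toSphere) *
        (ascPochhammer ℝ k).eval (((m : ℝ) + 1) / 2))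
    (c := (ascPochhammer ℝ k).eval (1 / 2) *
      (volume : Measure (Euc (m + 1))).toSphere.real Set.univ) (by linear_combination h)
  exact this

set_option maxHeartbeats 1600000 in
lemma aux_exp_integral (m : ℕ) (u : Euc (m + 1)) (hu : ‖u‖ = 1) (t : ℝ) :
    ∫ v : Sph (m + 1), Real.exp (2 * t * inner ℝ u (v : Euc (m + 1))) ∂(unifSphere (m + 1)) =
      hyp0F1 (((m : ℝ) + 1) / 2) (t ^ 2) := by
  have hb : ∀ v : Sph (m + 1), |inner ℝ u (v : Euc (m + 1))| ≤ 1 := by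
    intro v
    have := abs_real_inner_le_norm u (v : Euc (m + 1))
    rwa [hu, norm_eq_of_mem_sphere v, one_mul] at this
  have hbd : ∀ (n : ℕ) (v : Sph (m + 1)),
      ‖(2 * t * inner ℝ u (v : Euc (m + 1))) ^ n / (n.factorial : ℝ)‖ ≤
        |2 * t| ^ n / (n.factorial : ℝ) := by
    intro n v
    rw [norm_div, norm_pow, Real.norm_eq_abs, abs_mul, Real.norm_natCast]
    gcongr
    exact mul_le_of_le_one_right (abs_nonneg _) (hb v)
  have hint : ∀ n : ℕ, Integrable (fun v : Sph (m + 1) =>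
      (2 * t * inner ℝ u (v : Euc (m + 1))) ^ n / (n.factorial : ℝ)) (unifSphere (m + 1)) := by
    intro n
    refine Integrable.of_bound (Continuous.aestronglyMeasurable (by fun_prop)) _
      (ae_of_all _ (hbd n))
  have hs : Summable fun n : ℕ => |2 * t| ^ n / (n.factorial : ℝ) :=
    Real.summable_pow_div_factorial _
  have hsum := hasSum_integral_of_summable_integral_norm hint (by
    refine Summable.of_nonneg_of_le (fun n => integral_nonneg fun _ => norm_nonneg _) (fun n => ?_) hs
    calc _ ≤ ∫ v : Sph (m + 1), |2 * t| ^ n / (n.factorial : ℝ) ∂(unifSphere (m + 1)) :=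
          integral_mono (hint n).norm (integrable_const _) (hbd n)
      _ = _ := by simp)
  have e1 : ∀ v : Sph (m + 1), ∑' n : ℕ, (2 * t * inner ℝ u (v : Euc (m + 1))) ^ n /
      (n.factorial : ℝ) = Real.exp (2 * t * inner ℝ u (v : Euc (m + 1))) := by
    intro v
    rw [Real.exp_eq_exp_ℝ, NormedSpace.exp_eq_tsum_div]
  simp only [e1] at hsum
  have e2 : ∀ n : ℕ, ∫ v : Sph (m + 1), (2 * t * inner ℝ u (v : Euc (m + 1))) ^ n /
      (n.factorial : ℝ) ∂(unifSphere (m + 1)) = (2 * t) ^ n / (n.factorial : ℝ) *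
      ∫ v : Sph (m + 1), (inner ℝ u (v : Euc (m + 1))) ^ n ∂(unifSphere (m + 1)) := by
    intro n
    rw [← integral_const_mul]
    congr 1; ext v; rw [mul_pow]; ring
  simp only [e2] at hsum
  rw [← hsum.tsum_eq, ← tsum_even_add_odd
    (hsum.summable.comp_injective (mul_right_injective₀ two_ne_zero))
    (hsum.summable.comp_injective
      ((add_left_injective 1).comp (mul_right_injective₀ two_ne_zero)))]
  simp only [aux_moment_odd m u hu, aux_moment_even m u hu, mul_zero, tsum_zero, add_zero]
  rw [hyp0F1]
  congr 1; ext k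
  have hP := aux_poch_pos (((m : ℝ) + 1) / 2) (by positivity) k
  have hQ := aux_poch_pos (1 / 2) (by norm_num) k
  have hk : (0 : ℝ) < k.factorial := by positivity
  rw [aux_half_poch, pow_mul, mul_pow, mul_pow]
  norm_num
  field_simp

lemma aux_gauss_unif (m : ℕ) (u : Sph (m + 1)) (t : ℝ) :
    ∫ v : Sph (m + 1), Real.exp (-t * ‖(u : Euc (m + 1)) - (v : Euc (m + 1))‖ ^ 2)
        ∂(unifSphere (m + 1)) =
      Real.exp (-2 * t) * hyp0F1 (((m : ℝ) + 1) / 2) (t ^ 2) := by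
  rw [← aux_exp_integral m u (norm_eq_of_mem_sphere u) t, ← integral_const_mul]
  congr 1; ext v
  rw [norm_sub_sq_real, norm_eq_of_mem_sphere u, norm_eq_of_mem_sphere v, ← Real.exp_add]
  congr 1; ring

/-- The Fourier transform of a measure on the sphere. -/
def auxPhi {m : ℕ} (μ : Measure (Sph m)) (x : Euc m) : ℂ :=
  ∫ v : Sph m, Complex.exp ((inner ℝ (v : Euc m) x : ℝ) * Complex.I) ∂μ

lemma auxPhi_eq {m : ℕ} (μ : Measure (Sph m)) (x : Euc m) :
    auxPhi μ x = charFun (μ.map ((↑) : Sph m → Euc m)) x := by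
  rw [charFun_apply, integral_map (by fun_prop) (Continuous.aestronglyMeasurable (by fun_prop))]
  rfl

lemma auxPhi_continuous {m : ℕ} (μ : Measure (Sph m)) [IsProbabilityMeasure μ] :
    Continuous (auxPhi μ) := by
  refine continuous_of_dominated (bound := fun _ => 1) ?_ ?_ (integrable_const _) ?_
  · intro x
    exact Continuous.aestronglyMeasurable (by fun_prop)
  · intro x
    exact ae_of_all _ fun v => (Complex.norm_exp_ofReal_mul_I _).le
  · exact ae_of_all _ fun v => by fun_prop

lemma auxPhi_norm_le {m : ℕ} (μ : Measure (Sph m)) [IsProbabilityMeasure μ] (x : Euc m) :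
    ‖auxPhi μ x‖ ≤ 1 := by
  refine (norm_integral_le_of_norm_le_const (C := 1)
    (ae_of_all _ fun v => (Complex.norm_exp_ofReal_mul_I _).le)).trans ?_
  simp

lemma auxPhi_inj {m : ℕ} (μ ν : Measure (Sph m)) [IsProbabilityMeasure μ]
    [IsProbabilityMeasure ν] (h : auxPhi μ = auxPhi ν) : μ = ν := by
  have e : MeasurableEmbedding ((↑) : Sph m → Euc m) :=
    MeasurableEmbedding.subtype_coe (isClosed_sphere.measurableSet)
  refine e.map_injective ?_
  have : IsProbabilityMeasure (μ.map ((↑) : Sph m → Euc m)) :=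
    Measure.isProbabilityMeasure_map (by fun_prop)
  have : IsProbabilityMeasure (ν.map ((↑) : Sph m → Euc m)) :=
    Measure.isProbabilityMeasure_map (by fun_prop)
  refine Measure.ext_of_charFun ?_
  ext x
  rw [← auxPhi_eq, ← auxPhi_eq, h]

/-- Gaussian weight. -/
def auxGam (m : ℕ) (b : ℝ) : Measure (Euc m) :=
  (volume : Measure (Euc m)).withDensity fun x => ENNReal.ofReal (Real.exp (-b * ‖x‖ ^ 2))

lemma aux_gauss_integrable (m : ℕ) (b : ℝ) (hb : 0 < b) :
    Integrable (fun x : Euc m => Real.exp (-b * ‖x‖ ^ 2)) := by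
  have h := (GaussianFourier.integrable_cexp_neg_mul_sq_norm_add (V := Euc m) (b := (b : ℂ))
    (by simpa using hb) 0 0).norm
  refine h.congr (ae_of_all _ fun x => ?_)
  simp only [zero_mul, add_zero]
  rw [Complex.norm_exp]
  congr 1
  norm_cast

lemma auxGam_finite (m : ℕ) (b : ℝ) (hb : 0 < b) : IsFiniteMeasure (auxGam m b) :=
  isFiniteMeasure_withDensity_ofReal (aux_gauss_integrable m b hb).2

lemma auxGam_ac (m : ℕ) (b : ℝ) : (volume : Measure (Euc m)) ≪ auxGam m b := by
  refine withDensity_absolutelyContinuous' (by fun_prop) (ae_of_all _ fun x => ?_)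
  simp [Real.exp_pos]

lemma auxGam_char (m : ℕ) (t : ℝ) (ht : 0 < t) (w : Euc m) :
    ∫ x, Complex.exp ((inner ℝ w x : ℝ) * Complex.I) ∂(auxGam m (1 / (4 * t))) =
      (((4 * π * t) ^ ((m : ℝ) / 2) : ℝ) : ℂ) * (Real.exp (-t * ‖w‖ ^ 2) : ℝ) := by
  rw [auxGam, integral_withDensity_eq_integral_toReal_smul (by fun_prop) (by simp)]
  have h := GaussianFourier.integral_cexp_neg_mul_sq_norm_add (V := Euc m)
    (b := ((1 / (4 * t) : ℝ) : ℂ)) (by rw [Complex.ofReal_re]; positivity) Complex.I w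
  have htc : (t : ℂ) ≠ 0 := by exact_mod_cast ht.ne'
  calc _ = ∫ x : Euc m, Complex.exp (-((1 / (4 * t) : ℝ) : ℂ) * ‖x‖ ^ 2 +
        Complex.I * (inner ℝ w x : ℝ)) := by
        congr 1; ext x
        rw [ENNReal.toReal_ofReal (Real.exp_pos _).le, Complex.real_smul, Complex.ofReal_exp,
          ← Complex.exp_add]
        congr 1
        push_cast
        ring
    _ = _ := by
        rw [h, Complex.ofReal_cpow (by positivity), Complex.ofReal_exp]
        congr 2
        · push_cast; field_simp
        · simp
        · rw [Complex.I_sq]; push_cast; field_simp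

lemma aux_B {m : ℕ} (t : ℝ) (ht : 0 < t) (μ ν : Measure (Sph m)) [IsProbabilityMeasure μ]
    [IsProbabilityMeasure ν] :
    ∫ x, auxPhi μ x * (starRingEnd ℂ) (auxPhi ν x) ∂(auxGam m (1 / (4 * t))) =
      (((4 * π * t) ^ ((m : ℝ) / 2) *
        ∫ u, ∫ v, Real.exp (-t * ‖(u : Euc m) - (v : Euc m)‖ ^ 2) ∂ν ∂μ : ℝ) : ℂ) := by
  have : IsFiniteMeasure (auxGam m (1 / (4 * t))) := auxGam_finite m _ (by positivity)
  have e1 : ∀ x : Euc m, auxPhi μ x * (starRingEnd ℂ) (auxPhi ν x) =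
      ∫ p : Sph m × Sph m, Complex.exp
        ((inner ℝ ((p.1 : Euc m) - (p.2 : Euc m)) x : ℝ) * Complex.I) ∂(μ.prod ν) := by
    intro x
    rw [auxPhi, auxPhi, ← integral_conj, ← integral_prod_mul]
    congr 1; ext p
    rw [← Complex.exp_conj, ← Complex.exp_add]
    congr 1
    simp [inner_sub_left]
    ring
  simp only [e1]
  rw [integral_integral_swap]
  · simp only [auxGam_char m t ht]
    rw [integral_const_mul, integral_complex_ofReal, Complex.ofReal_mul]
    congr 2
    rw [integral_prod]
    refine Integrable.of_bound (C := 1) (Continuous.aestronglyMeasurable (by fun_prop))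
      (ae_of_all _ fun p => ?_)
    rw [Real.norm_eq_abs, Real.abs_exp, Real.exp_le_one_iff]
    have := mul_nonneg ht.le (sq_nonneg ‖(p.1 : Euc m) - (p.2 : Euc m)‖)
    linarith
  · refine Integrable.of_bound (C := 1) (Continuous.aestronglyMeasurable ?_)
      (ae_of_all _ fun p => (Complex.norm_exp_ofReal_mul_I _).le)
    fun_prop

lemma aux_key {m : ℕ} (t : ℝ) (ht : 0 < t) (μ σ : Measure (Sph m)) [IsProbabilityMeasure μ]
    [IsProbabilityMeasure σ] (c : ℝ)
    (hc : ∀ u : Sph m, ∫ v, Real.exp (-t * ‖(u : Euc m) - (v : Euc m)‖ ^ 2) ∂σ = c) :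
    ∫ x, ‖auxPhi μ x - auxPhi σ x‖ ^ 2 ∂(auxGam m (1 / (4 * t))) =
      (4 * π * t) ^ ((m : ℝ) / 2) * (gaussEnergy t μ - c) := by
  have : IsFiniteMeasure (auxGam m (1 / (4 * t))) := auxGam_finite m _ (by positivity)
  have hμμ := aux_B t ht μ μ
  have hμσ := aux_B t ht μ σ
  have hσσ := aux_B t ht σ σ
  simp only [hc] at hμσ hσσ
  simp only [integral_const, probReal_univ, smul_eq_mul, one_mul] at hμσ hσσ
  have hσμ : ∫ x, auxPhi σ x * (starRingEnd ℂ) (auxPhi μ x) ∂(auxGam m (1 / (4 * t))) =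
      (((4 * π * t) ^ ((m : ℝ) / 2) * c : ℝ) : ℂ) := by
    rw [← Complex.conj_ofReal, ← hμσ, ← integral_conj]
    congr 1; ext x
    rw [map_mul, Complex.conj_conj, mul_comm]
  have hI : ∀ (α β : Measure (Sph m)) [IsProbabilityMeasure α] [IsProbabilityMeasure β],
      Integrable (fun x => auxPhi α x * (starRingEnd ℂ) (auxPhi β x))
        (auxGam m (1 / (4 * t))) := by
    intro α β _ _
    have h1 := auxPhi_continuous α
    have h2 := auxPhi_continuous β
    refine Integrable.of_bound (C := 1) (Continuous.aestronglyMeasurable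
      (h1.mul (Complex.continuous_conj.comp h2))) (ae_of_all _ fun x => ?_)
    rw [norm_mul, RCLike.norm_conj]
    exact mul_le_one₀ (auxPhi_norm_le α x) (norm_nonneg _) (auxPhi_norm_le β x)
  have hexp : ∀ x, ((‖auxPhi μ x - auxPhi σ x‖ ^ 2 : ℝ) : ℂ) =
      (auxPhi μ x * (starRingEnd ℂ) (auxPhi μ x) - auxPhi μ x * (starRingEnd ℂ) (auxPhi σ x)) -
      (auxPhi σ x * (starRingEnd ℂ) (auxPhi μ x) - auxPhi σ x * (starRingEnd ℂ) (auxPhi σ x)) := by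
    intro x
    rw [Complex.ofReal_pow, ← Complex.mul_conj', map_sub]
    ring
  rw [← Complex.ofReal_inj, ← integral_complex_ofReal]
  simp only [hexp]
  rw [integral_sub (by exact (hI μ μ).sub (hI μ σ)) (by exact (hI σ μ).sub (hI σ σ)),
    integral_sub (hI μ μ) (hI μ σ), integral_sub (hI σ μ) (hI σ σ), hμμ, hμσ, hσμ, hσσ,
    gaussEnergy]
  push_cast
  ring

/-- For `d ≥ 1`, `t > 0`, every Borel probability measure `μ` on `S^d` has
Gaussian energy at least `e^{−2t}·₀F₁(;(d+1)/2;t²)`, with equality iff `μ = σ_d`. -/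
theorem gaussEnergy_ge_hyp0F1 (d : ℕ) (hd : 1 ≤ d) (t : ℝ) (ht : 0 < t)
    (μ : Measure (Sph (d + 1))) [IsProbabilityMeasure μ] :
    Real.exp (-2 * t) * hyp0F1 (((d : ℝ) + 1) / 2) (t ^ 2) ≤ gaussEnergy t μ ∧
      (gaussEnergy t μ = Real.exp (-2 * t) * hyp0F1 (((d : ℝ) + 1) / 2) (t ^ 2) ↔
        μ = unifSphere (d + 1)) := by
  have hc := fun u : Sph (d + 1) => aux_gauss_unif d u t
  have hkey := aux_key t ht μ (unifSphere (d + 1)) _ hc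
  set c := Real.exp (-2 * t) * hyp0F1 (((d : ℝ) + 1) / 2) (t ^ 2) with hcdef
  have hC : 0 < (4 * π * t) ^ (((d + 1 : ℕ) : ℝ) / 2) := by positivity
  have hfin : IsFiniteMeasure (auxGam (d + 1) (1 / (4 * t))) := auxGam_finite _ _ (by positivity)
  refine ⟨?_, ?_, ?_⟩
  · have h0 : 0 ≤ (4 * π * t) ^ (((d + 1 : ℕ) : ℝ) / 2) * (gaussEnergy t μ - c) := by
      rw [← hkey]
      exact integral_nonneg fun x => by positivity
    linarith [nonneg_of_mul_nonneg_right h0 hC]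
  · intro h
    have hcont : Continuous fun x => ‖auxPhi μ x - auxPhi (unifSphere (d + 1)) x‖ ^ 2 :=
      ((auxPhi_continuous μ).sub (auxPhi_continuous _)).norm.pow 2
    have hbd : ∀ x, ‖‖auxPhi μ x - auxPhi (unifSphere (d + 1)) x‖ ^ 2‖ ≤ 2 ^ 2 := by
      intro x
      rw [norm_pow, norm_norm]
      have h1 := norm_sub_le (auxPhi μ x) (auxPhi (unifSphere (d + 1)) x)
      have h2 := auxPhi_norm_le μ x
      have h3 := auxPhi_norm_le (unifSphere (d + 1)) x
      gcongr
      linarith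
    rw [h, sub_self, mul_zero, integral_eq_zero_iff_of_nonneg (fun x => by positivity)
      (Integrable.of_bound hcont.aestronglyMeasurable _ (ae_of_all _ hbd))] at hkey
    have hvol := (auxGam_ac (d + 1) (1 / (4 * t))).ae_eq hkey
    have hz := (Continuous.ae_eq_iff_eq volume hcont continuous_const).1 hvol
    refine auxPhi_inj μ _ (funext fun x => ?_)
    have : ‖auxPhi μ x - auxPhi (unifSphere (d + 1)) x‖ ^ 2 = (0 : ℝ) := congrFun hz x
    simpa [sub_eq_zero] using this
  · intro h
    rw [h, gaussEnergy]
    simp only [hc]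
    simp
end
end

section
/- Let d ≥ 1 and τ > 0. The uniform measure σ_d is the unique Borel probability measure on S^d minimizing the functional μ ↦ ∫_{S^d} log( ∫_{S^d} e^{u·v/τ} dμ(v) ) dμ(u): for every Borel probability measure μ on S^d, this functional at μ is at least its value at σ_d, with equality if and only if μ = σ_d (as measures on the Borel subsets of S^d). -/
open MeasureTheory Real Filter Metric
open scoped RealInnerProductSpace ENNReal Topology BigOperators

noncomputable section

/-- The functional `μ ↦ ∫ log(∫ e^{u·v/τ} dμ(v)) dμ(u)` on measures on the sphere in `ℝ^m`. -/
noncomputable def logPotFunctional (τ : ℝ) {m : ℕ} (μ : Measure (Sph m)) : ℝ :=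
  ∫ u, Real.log (∫ v, Real.exp (⟪(u : Euc m), (v : Euc m)⟫ / τ) ∂μ) ∂μ


/-! ### Existence of a minimizer and constancy of its potential -/

section Abstract

set_option linter.unusedSectionVars false

variable {X : Type*} [TopologicalSpace X] [CompactSpace X] [TopologicalSpace.PseudoMetrizableSpace X]
  [T2Space X] [MeasurableSpace X] [BorelSpace X]

/-- Joint continuity of the pairing between probability measures and continuous functions. -/
lemma continuous_pairing :
    Continuous (fun p : ProbabilityMeasure X × C(X, ℝ) => ∫ x, p.2 x ∂(p.1 : Measure X)) := by
  rw [continuous_iff_continuousAt]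
  rintro ⟨μ, f⟩
  have h1 : Tendsto (fun p : ProbabilityMeasure X × C(X, ℝ) => ∫ x, f x ∂(p.1 : Measure X))
      (𝓝 (μ, f)) (𝓝 (∫ x, f x ∂(μ : Measure X))) := by
    have := (ProbabilityMeasure.continuous_integral_continuousMap (X := X) f)
    exact (this.comp continuous_fst).tendsto (μ, f)
  have h2 : Tendsto (fun p : ProbabilityMeasure X × C(X, ℝ) => ‖p.2 - f‖)
      (𝓝 (μ, f)) (𝓝 0) := by
    have : Continuous (fun p : ProbabilityMeasure X × C(X, ℝ) => ‖p.2 - f‖) := by fun_prop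
    simpa using this.tendsto (μ, f)
  have h3 : Tendsto (fun p : ProbabilityMeasure X × C(X, ℝ) =>
      ∫ x, p.2 x ∂(p.1 : Measure X) - ∫ x, f x ∂(p.1 : Measure X)) (𝓝 (μ, f)) (𝓝 0) := by
    refine squeeze_zero_norm (fun p => ?_) h2
    rw [← integral_sub (p.2.continuous.integrable_of_hasCompactSupport (.of_compactSpace _))
      (f.continuous.integrable_of_hasCompactSupport (.of_compactSpace _))]
    have := norm_integral_le_of_norm_le_const (μ := (p.1 : Measure X)) (C := ‖p.2 - f‖)
      (f := fun x => p.2 x - f x) (Eventually.of_forall fun x => (p.2 - f).norm_coe_le_norm x)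
    simpa using this
  have := h3.add h1
  simpa [ContinuousAt] using this

/-- The potential functional attains its minimum. -/
lemma exists_min (K : X → X → ℝ) (hK : Continuous fun p : X × X => K p.1 p.2)
    (hpos : ∀ u v, 0 < K u v) [Nonempty X] :
    ∃ μ : ProbabilityMeasure X, ∀ ν : ProbabilityMeasure X,
      ∫ u, Real.log (∫ v, K u v ∂(μ : Measure X)) ∂(μ : Measure X) ≤
      ∫ u, Real.log (∫ v, K u v ∂(ν : Measure X)) ∂(ν : Measure X) := by
  let Kc : C(X, C(X, ℝ)) := ContinuousMap.curry ⟨fun p : X × X => K p.1 p.2, hK⟩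
  have hU : Continuous fun p : ProbabilityMeasure X × X => ∫ v, K p.2 v ∂(p.1 : Measure X) :=
    continuous_pairing.comp (continuous_fst.prodMk (Kc.continuous.comp continuous_snd))
  have hUpos : ∀ p : ProbabilityMeasure X × X, 0 < ∫ v, K p.2 v ∂(p.1 : Measure X) := by
    intro p
    have hc : Continuous (K p.2) := (Kc p.2).continuous
    refine (integral_pos_iff_support_of_nonneg (fun v => (hpos _ v).le)
      (hc.integrable_of_hasCompactSupport (.of_compactSpace _))).2 ?_
    have : Function.support (K p.2) = Set.univ := by
      ext v; simp [(hpos p.2 v).ne']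
    simp [this]
  have hL : Continuous fun p : ProbabilityMeasure X × X =>
      Real.log (∫ v, K p.2 v ∂(p.1 : Measure X)) := hU.log fun p => (hUpos p).ne'
  let Lc : C(ProbabilityMeasure X, C(X, ℝ)) := ContinuousMap.curry ⟨_, hL⟩
  have hF : Continuous fun μ : ProbabilityMeasure X =>
      ∫ u, Real.log (∫ v, K u v ∂(μ : Measure X)) ∂(μ : Measure X) :=
    continuous_pairing.comp (continuous_id.prodMk Lc.continuous)
  have : Nonempty (ProbabilityMeasure X) := ⟨⟨Measure.dirac (Classical.arbitrary X), inferInstance⟩⟩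
  obtain ⟨μ, -, h⟩ := isCompact_univ.exists_isMinOn Set.univ_nonempty hF.continuousOn
  exact ⟨μ, fun ν => h (Set.mem_univ ν)⟩

/-- A quadratic that is nonnegative near `0` with zero constant term has zero linear term. -/
lemma linear_zero (A B δ : ℝ) (hδ : 0 < δ) (h : ∀ ε, |ε| ≤ δ → 0 ≤ ε * A + ε ^ 2 * B) : A = 0 := by
  by_contra hA
  have hApos : 0 < |A| := abs_pos.2 hA
  set t := min δ (|A| / (2 * (|B| + 1))) with ht
  have hB : 0 < |B| + 1 := by positivity
  have ht0 : 0 < t := by positivity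
  have h2 : t * (|B| + 1) ≤ |A| / 2 := by
    calc t * (|B| + 1) ≤ |A| / (2 * (|B| + 1)) * (|B| + 1) := by gcongr; exact min_le_right _ _
      _ = |A| / 2 := by field_simp
  have key : t ^ 2 * B < t * |A| := by
    have : t * B ≤ t * |B| := by gcongr; exact le_abs_self B
    nlinarith
  rcases lt_or_gt_of_ne hA with hn | hp
  · have := h t (by rw [abs_of_pos ht0]; exact min_le_left _ _)
    rw [abs_of_neg hn] at key
    nlinarith
  · have := h (-t) (by rw [abs_neg, abs_of_pos ht0]; exact min_le_left _ _)
    rw [abs_of_pos hp] at key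
    nlinarith

/-- At a minimizer the potential is constant almost everywhere. -/
lemma min_value (K : X → X → ℝ) (hK : Continuous fun p : X × X => K p.1 p.2)
    (hpos : ∀ u v, 0 < K u v) (hsymm : ∀ u v, K u v = K v u)
    (μ : Measure X) [IsProbabilityMeasure μ]
    (hmin : ∀ ν : Measure X, IsProbabilityMeasure ν →
      ∫ u, Real.log (∫ v, K u v ∂μ) ∂μ ≤ ∫ u, Real.log (∫ v, K u v ∂ν) ∂ν) :
    ∫ u, Real.log (∫ v, K u v ∂μ) ∂μ = Real.log (∫ u, ∫ v, K u v ∂μ ∂μ) := by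
  have hint : ∀ f : X → ℝ, Continuous f → Integrable f μ := fun f hf =>
    hf.integrable_of_hasCompactSupport (.of_compactSpace _)
  have hpc : ∀ k : X → X → ℝ, Continuous (fun p : X × X => k p.1 p.2) →
      Continuous fun u => ∫ v, k u v ∂μ := by
    intro k hk
    let Kc : C(X, C(X, ℝ)) := ContinuousMap.curry ⟨fun p : X × X => k p.1 p.2, hk⟩
    let μ' : ProbabilityMeasure X := ⟨μ, inferInstance⟩
    have h0 : Continuous fun _ : X => μ' := continuous_const
    exact continuous_pairing.comp (h0.prodMk Kc.continuous)
  have hposint : ∀ f : X → ℝ, Continuous f → (∀ x, 0 < f x) → 0 < ∫ x, f x ∂μ := by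
    intro f hf hfp
    refine (integral_pos_iff_support_of_nonneg (fun v => (hfp v).le) (hint f hf)).2 ?_
    have : Function.support f = Set.univ := by
      ext v; simp [(hfp v).ne']
    simp [this]
  have hKu : ∀ u, Continuous (K u) := fun u => hK.comp (by fun_prop : Continuous fun v => (u, v))
  set U : X → ℝ := fun u => ∫ v, K u v ∂μ with hUdef
  have hUc : Continuous U := hpc K hK
  have hUp : ∀ u, 0 < U u := fun u => hposint _ (hKu u) (hpos u)
  have hlogc : Continuous fun u => Real.log (U u) := hUc.log fun u => (hUp u).ne'
  set m : ℝ := ∫ u, U u ∂μ with hm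
  have hmp : 0 < m := hposint U hUc hUp
  set g : X → ℝ := fun u => U u - m with hg
  have hgc : Continuous g := by fun_prop
  have hgint : ∫ u, g u ∂μ = 0 := by
    simp [hg, integral_sub (hint U hUc) (integrable_const m), ← hm]
  set V : X → ℝ := fun u => ∫ v, K u v * g v ∂μ with hV
  have hVc : Continuous V := hpc (fun u v => K u v * g v) (by fun_prop)
  have hVUc : Continuous fun u => V u / U u := hVc.div hUc fun u => (hUp u).ne'
  set A : ℝ := ∫ u, g u * Real.log (U u) + V u / U u ∂μ with hA
  set B : ℝ := ∫ u, g u * (V u / U u) ∂μ with hB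
  obtain ⟨C, hC⟩ : ∃ C, ∀ u, |g u| ≤ C := by
    obtain ⟨C, hC⟩ := (isCompact_univ (X := X)).exists_bound_of_continuousOn hgc.continuousOn
    exact ⟨C, fun u => hC u (Set.mem_univ u)⟩
  -- first variation
  have hA0 : A = 0 := by
    have hC0 : 0 < |C| + 1 := by positivity
    refine linear_zero A B (1 / (2 * (|C| + 1))) (by positivity) fun ε hε => ?_
    have hw : ∀ u, 0 < 1 + ε * g u := by
      intro u
      have h1 : |ε * g u| ≤ 1 / (2 * (|C| + 1)) * (|C| + 1) := by
        rw [abs_mul]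
        gcongr
        exact (hC u).trans ((le_abs_self C).trans (by linarith))
      have h2 : 1 / (2 * (|C| + 1)) * (|C| + 1) = 1 / 2 := by field_simp
      have := neg_abs_le (ε * g u)
      linarith
    have hwc : Continuous fun u => 1 + ε * g u := by fun_prop
    set ν : Measure X := μ.withDensity fun u => ENNReal.ofReal (1 + ε * g u) with hν
    have hνint : ∀ f : X → ℝ, ∫ u, f u ∂ν = ∫ u, (1 + ε * g u) * f u ∂μ := by
      intro f
      rw [hν, integral_withDensity_eq_integral_toReal_smul
        (by fun_prop) (by simp)]
      refine integral_congr_ae (Eventually.of_forall fun u => ?_)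
      simp [ENNReal.toReal_ofReal (hw u).le]
    have hνp : IsProbabilityMeasure ν := by
      refine ⟨?_⟩
      rw [hν, withDensity_apply _ MeasurableSet.univ, Measure.restrict_univ,
        ← ofReal_integral_eq_lintegral_ofReal (hint _ hwc) (Eventually.of_forall fun u => (hw u).le),
        integral_add (integrable_const _) ((hint _ hgc).const_mul _), integral_const_mul, hgint]
      simp
    have hle := hmin ν hνp
    have hUν : ∀ u, ∫ v, K u v ∂ν = U u + ε * V u := by
      intro u
      rw [hνint, hUdef, hV]
      simp only
      have hk := hKu u
      rw [← integral_const_mul, ← integral_add (hint _ (by fun_prop)) (hint _ (by fun_prop))]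
      congr 1
      ext v
      ring
    have hUνp : ∀ u, 0 < U u + ε * V u := by
      intro u
      rw [← hUν, hνint]
      exact hposint _ (hwc.mul (hKu u)) fun v => mul_pos (hw v) (hpos u v)
    rw [hνint] at hle
    simp only [hUν] at hle
    have hle2 : ∫ u, (1 + ε * g u) * Real.log (U u + ε * V u) ∂μ ≤
        ∫ u, (Real.log (U u) + ε * (g u * Real.log (U u) + V u / U u)
          + ε ^ 2 * (g u * (V u / U u))) ∂μ := by
      refine integral_mono (hint _ (hwc.mul (Continuous.log (by fun_prop) fun u => (hUνp u).ne')))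
        (hint _ (by fun_prop)) fun u => ?_
      have h1 : Real.log (U u + ε * V u) ≤ Real.log (U u) + ε * (V u / U u) := by
        have := Real.log_le_sub_one_of_pos (div_pos (hUνp u) (hUp u))
        rw [Real.log_div (hUνp u).ne' (hUp u).ne'] at this
        have h3 : (U u + ε * V u) / U u = 1 + ε * (V u / U u) := by
          field_simp [(hUp u).ne']
        linarith
      calc _ ≤ (1 + ε * g u) * (Real.log (U u) + ε * (V u / U u)) :=
            mul_le_mul_of_nonneg_left h1 (hw u).le
        _ = _ := by ring
    rw [integral_add (hint _ (by fun_prop)) (hint _ (by fun_prop)),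
      integral_add (hint _ hlogc) (hint _ (by fun_prop)), integral_const_mul,
      integral_const_mul] at hle2
    linarith
  -- the two parts of the first variation are nonnegative
  have hswap : ∀ h : X → ℝ, Continuous h →
      ∫ u, ∫ v, K u v * h v ∂μ ∂μ = ∫ v, U v * h v ∂μ := by
    intro h hh
    rw [integral_integral_swap]
    · refine integral_congr_ae (Eventually.of_forall fun v => ?_)
      simp only [hUdef]
      rw [integral_mul_const]
      simp only [hsymm v]
    · have : Continuous (Function.uncurry fun u v => K u v * h v) := by
        unfold Function.uncurry; fun_prop
      exact this.integrable_of_hasCompactSupport (.of_compactSpace _)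
  have hVU : 0 ≤ ∫ u, V u / U u ∂μ := by
    set W : X → ℝ := fun u => ∫ v, K u v * Real.log (U v) ∂μ with hW
    have hWc : Continuous W := hpc (fun u v => K u v * Real.log (U v)) (hK.mul (hlogc.comp continuous_snd))
    have hWint : ∫ u, W u ∂μ = ∫ u, U u * Real.log (U u) ∂μ := hswap _ hlogc
    have hpt : ∀ u, U u + W u - U u * Real.log (U u) - m ≤ V u / U u := by
      intro u
      have hk := hKu u
      have hkl : Continuous fun v => K u v * Real.log (U v) := hk.mul hlogc
      have hVu : V u / U u = ∫ v, K u v * (U v / U u) ∂μ - m := by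
        rw [hV]
        simp only [hg, mul_sub]
        rw [integral_sub (hint _ (by fun_prop)) (hint _ (by fun_prop)), integral_mul_const, sub_div, ← integral_div]
        have : (∫ v, K u v ∂μ) * m / U u = m := by
          change U u * m / U u = m
          field_simp [(hUp u).ne']
        rw [this]
        simp only [mul_div_assoc]
      rw [hVu]
      have : U u + W u - U u * Real.log (U u) =
          ∫ v, (K u v + K u v * Real.log (U v) - K u v * Real.log (U u)) ∂μ := by
        rw [integral_sub (hint _ (by fun_prop)) (hint _ (by fun_prop)),
          integral_add (hint _ (by fun_prop)) (hint _ hkl), integral_mul_const]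
      rw [this]
      refine sub_le_sub_right (integral_mono
        (hint _ (by fun_prop)) (hint _ (by fun_prop)) fun v => ?_) m
      have h1 := Real.log_le_sub_one_of_pos (div_pos (hUp v) (hUp u))
      rw [Real.log_div (hUp v).ne' (hUp u).ne'] at h1
      have h2 := mul_le_mul_of_nonneg_left h1 (hpos u v).le
      simp only
      linarith
    have h4 := integral_mono (hint _ (by fun_prop)) (hint _ hVUc) hpt
    rw [integral_sub (hint _ (by fun_prop)) (integrable_const _),
      integral_sub (hint _ (by fun_prop)) (hint _ (by fun_prop)),
      integral_add (hint _ hUc) (hint _ hWc), hWint] at h4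
    simp only [integral_const, probReal_univ, one_smul, ← hm] at h4
    linarith
  have hgl : ∫ u, g u * (Real.log (U u) - Real.log m) ∂μ = ∫ u, g u * Real.log (U u) ∂μ := by
    simp only [mul_sub]
    rw [integral_sub (hint _ (by fun_prop)) (hint _ (by fun_prop)), integral_mul_const, hgint]
    simp
  have hnn : ∀ u, 0 ≤ g u * (Real.log (U u) - Real.log m) := by
    intro u
    rcases le_total m (U u) with h | h
    · exact mul_nonneg (sub_nonneg.2 h) (sub_nonneg.2 (Real.log_le_log hmp h))
    · exact mul_nonneg_of_nonpos_of_nonpos (sub_nonpos.2 h)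
        (sub_nonpos.2 (Real.log_le_log (hUp u) h))
  have hzero : ∫ u, g u * (Real.log (U u) - Real.log m) ∂μ = 0 := by
    refine le_antisymm ?_ (integral_nonneg hnn)
    rw [hA, integral_add (hint _ (by fun_prop)) (hint _ hVUc)] at hA0
    linarith
  have hae := (integral_eq_zero_iff_of_nonneg hnn (hint _ (by fun_prop))).1 hzero
  have hlogm : ∀ᵐ u ∂μ, Real.log (U u) = Real.log m := by
    filter_upwards [hae] with u hu
    rcases mul_eq_zero.1 hu with h | h
    · rw [sub_eq_zero.1 h]
    · exact sub_eq_zero.1 h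
  rw [integral_congr_ae hlogm]
  simp

end Abstract

/-! ### Rotation invariance of the uniform measure -/

section Sphere

open scoped Pointwise

variable {n : ℕ}

/-- The action of a linear isometry on the sphere. -/
def sphMap (g : Euc n ≃ₗᵢ[ℝ] Euc n) (u : Sph n) : Sph n :=
  ⟨g u, by simp⟩

lemma continuous_sphMap (g : Euc n ≃ₗᵢ[ℝ] Euc n) : Continuous (sphMap g) := by
  unfold sphMap
  fun_prop

lemma toSphere_map_s14 (g : Euc n ≃ₗᵢ[ℝ] Euc n) :
    (volume : Measure (Euc n)).toSphere.map (sphMap g) = (volume : Measure (Euc n)).toSphere := by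
  ext s hs
  have hm := (continuous_sphMap g).measurable
  rw [Measure.map_apply hm hs, Measure.toSphere_apply' _ (hm hs), Measure.toSphere_apply' _ hs]
  congr 1
  have : Set.Ioo (0 : ℝ) 1 • ((fun u : Sph n => (u : Euc n)) '' (sphMap g ⁻¹' s)) =
      g ⁻¹' (Set.Ioo (0 : ℝ) 1 • ((fun u : Sph n => (u : Euc n)) '' s)) := by
    ext x
    simp only [Set.mem_smul, Set.mem_preimage, Set.mem_image]
    constructor
    · rintro ⟨r, hr, _, ⟨u, hu, rfl⟩, rfl⟩
      exact ⟨r, hr, _, ⟨sphMap g u, hu, rfl⟩, by simp [sphMap]⟩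
    · rintro ⟨r, hr, _, ⟨u, hu, rfl⟩, h⟩
      refine ⟨r, hr, _, ⟨sphMap g.symm u, ?_, rfl⟩, ?_⟩
      · have : sphMap g (sphMap g.symm u) = u := by
          apply Subtype.ext; simp [sphMap]
        rwa [this]
      · apply g.injective
        simpa [sphMap] using h
  rw [this]
  exact (g.measurePreserving.measure_preimage_equiv (f := g.toHomeomorph.toMeasurableEquiv) _)

lemma unifSphere_map (g : Euc n ≃ₗᵢ[ℝ] Euc n) :
    (unifSphere n).map (sphMap g) = unifSphere n := by
  rw [unifSphere, Measure.map_smul, toSphere_map_s14]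

lemma unifSphere_prob (d : ℕ) : IsProbabilityMeasure (unifSphere (d + 1)) := by
  refine ⟨?_⟩
  rw [unifSphere, Measure.smul_apply, smul_eq_mul]
  refine ENNReal.inv_mul_cancel ?_ (measure_ne_top _ _)
  rw [Ne, Measure.measure_univ_eq_zero]
  exact Measure.toSphere_ne_zero _

lemma unif_potential_const (τ : ℝ) (x y : Sph n) :
    ∫ v, Real.exp (⟪(x : Euc n), (v : Euc n)⟫ / τ) ∂(unifSphere n) =
    ∫ v, Real.exp (⟪(y : Euc n), (v : Euc n)⟫ / τ) ∂(unifSphere n) := by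
  let g : Euc n ≃ₗᵢ[ℝ] Euc n := Submodule.reflection (ℝ ∙ ((x : Euc n) - (y : Euc n)))ᗮ
  have hg : g x = y := Submodule.reflection_sub (by simp)
  conv_rhs => rw [← unifSphere_map g]
  rw [integral_map (continuous_sphMap g).aemeasurable
    (Continuous.aestronglyMeasurable (by fun_prop))]
  refine integral_congr_ae (Eventually.of_forall fun v => ?_)
  simp only [sphMap, ← hg, LinearIsometryEquiv.inner_map_map]

end Sphere

/-! ### Strict positive definiteness of the kernel -/

section PosDef

lemma pd_aux {X Y : Type*} [MeasurableSpace X] [MeasurableSpace Y] (μ ν : Measure X)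
    [IsProbabilityMeasure μ] [IsProbabilityMeasure ν] (ρ : Measure Y) [IsFiniteMeasure ρ]
    (a : X → Y → ℝ) (ha : Measurable (Function.uncurry a)) (hb : ∀ x y, |a x y| ≤ 1) :
    ∫ u, ∫ v, ∫ y, a u y * a v y ∂ρ ∂ν ∂μ = ∫ y, (∫ u, a u y ∂μ) * (∫ v, a v y ∂ν) ∂ρ := by
  have hb2 : ∀ u v y, ‖a u y * a v y‖ ≤ 1 := fun u v y => by
    rw [norm_mul]; exact mul_le_one₀ (hb _ _) (norm_nonneg _) (hb _ _)
  have hau : ∀ u, Measurable (a u) := fun u => ha.comp (measurable_const.prodMk measurable_id)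
  have hay : ∀ y, Measurable (fun u => a u y) :=
    fun y => ha.comp (measurable_id.prodMk measurable_const)
  have h1 : ∀ u, ∫ v, ∫ y, a u y * a v y ∂ρ ∂ν = ∫ y, a u y * (∫ v, a v y ∂ν) ∂ρ := by
    intro u
    rw [integral_integral_swap]
    · simp only [integral_const_mul]
    · refine Integrable.of_bound (C := 1) ?_ (Eventually.of_forall fun p => hb2 _ _ _)
      exact ((hau u).comp measurable_snd |>.mul ha).aestronglyMeasurable
  simp only [h1]
  have hA : Measurable fun y => ∫ v, a v y ∂ν :=
    (StronglyMeasurable.integral_prod_left' (f := Function.uncurry a) ha.stronglyMeasurable).measurable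
  rw [integral_integral_swap]
  · simp only [integral_mul_const]
  · refine Integrable.of_bound (C := 1) ?_ (Eventually.of_forall fun p => ?_)
    · exact (ha.mul (hA.comp measurable_snd)).aestronglyMeasurable
    · simp only [Function.uncurry]
      rw [norm_mul]
      refine mul_le_one₀ (hb _ _) (norm_nonneg _) ?_
      have := norm_integral_le_of_norm_le_const (μ := ν) (C := 1)
        (f := fun v => a v p.2) (Eventually.of_forall fun v => hb _ _)
      simpa using this

lemma pd_sq {X Y : Type*} [MeasurableSpace X] [MeasurableSpace Y] (μ ν : Measure X)
    [IsProbabilityMeasure μ] [IsProbabilityMeasure ν] (ρ : Measure Y) [IsFiniteMeasure ρ]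
    (a : X → Y → ℝ) (ha : Measurable (Function.uncurry a)) (hb : ∀ x y, |a x y| ≤ 1) :
    Integrable (fun y => ((∫ u, a u y ∂μ) - (∫ v, a v y ∂ν)) ^ 2) ρ ∧
    (∫ u, ∫ v, ∫ y, a u y * a v y ∂ρ ∂μ ∂μ) - 2 * (∫ u, ∫ v, ∫ y, a u y * a v y ∂ρ ∂ν ∂μ)
      + (∫ u, ∫ v, ∫ y, a u y * a v y ∂ρ ∂ν ∂ν) =
    ∫ y, ((∫ u, a u y ∂μ) - (∫ v, a v y ∂ν)) ^ 2 ∂ρ := by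
  have hA : ∀ κ : Measure X, IsProbabilityMeasure κ → Measurable fun y => ∫ v, a v y ∂κ :=
    fun κ _ =>
    (StronglyMeasurable.integral_prod_left' (f := Function.uncurry a) ha.stronglyMeasurable).measurable
  have hB : ∀ κ : Measure X, IsProbabilityMeasure κ → ∀ y, ‖∫ v, a v y ∂κ‖ ≤ 1 := by
    intro κ _ y
    have := norm_integral_le_of_norm_le_const (μ := κ) (C := 1)
        (f := fun v => a v y) (Eventually.of_forall fun v => hb _ _)
    simpa using this
  have hI : ∀ κ κ' : Measure X, IsProbabilityMeasure κ → IsProbabilityMeasure κ' →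
      Integrable (fun y => (∫ u, a u y ∂κ) * (∫ v, a v y ∂κ')) ρ := by
    intro κ κ' h h'
    refine Integrable.of_bound (C := 1) ((hA κ h).mul (hA κ' h')).aestronglyMeasurable
      (Eventually.of_forall fun y => ?_)
    rw [norm_mul]
    exact mul_le_one₀ (hB κ h y) (norm_nonneg _) (hB κ' h' y)
  have e : (fun y => ((∫ u, a u y ∂μ) - (∫ v, a v y ∂ν)) ^ 2) = fun y =>
      (∫ u, a u y ∂μ) * (∫ u, a u y ∂μ) - 2 * ((∫ u, a u y ∂μ) * (∫ u, a u y ∂ν))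
        + (∫ u, a u y ∂ν) * (∫ u, a u y ∂ν) := by
    ext y; ring
  have i1 := hI μ μ inferInstance inferInstance
  have i2 := hI μ ν inferInstance inferInstance
  have i3 := hI ν ν inferInstance inferInstance
  refine ⟨?_, ?_⟩
  · rw [e]
    exact (i1.sub (i2.const_mul 2)).add i3
  · rw [e, integral_add (by exact i1.sub (i2.const_mul 2)) i3, integral_sub i1 (i2.const_mul 2),
      integral_const_mul, pd_aux μ μ ρ a ha hb, pd_aux μ ν ρ a ha hb, pd_aux ν ν ρ a ha hb]

/-- The Gaussian weight. -/
def gw (n : ℕ) (τ : ℝ) : Measure (Euc n) :=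
  volume.withDensity fun x => ENNReal.ofReal (Real.exp (-(τ / 2) * ‖x‖ ^ 2))

lemma gw_integral (n : ℕ) (τ : ℝ) (f : Euc n → ℝ) :
    ∫ x, f x ∂(gw n τ) = ∫ x, Real.exp (-(τ / 2) * ‖x‖ ^ 2) * f x := by
  rw [gw, integral_withDensity_eq_integral_toReal_smul (by fun_prop) (by simp)]
  refine integral_congr_ae (Eventually.of_forall fun u => ?_)
  simp [ENNReal.toReal_ofReal (Real.exp_pos _).le]

lemma gw_cint {n : ℕ} {τ : ℝ} (hτ : 0 < τ) (w : Euc n) :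
    Integrable (fun x : Euc n => Complex.exp (-((τ / 2 : ℝ) : ℂ) * (‖x‖ : ℂ) ^ 2 +
      Complex.I * ((⟪w, x⟫ : ℝ) : ℂ))) := by
  exact GaussianFourier.integrable_cexp_neg_mul_sq_norm_add
    (by simpa using hτ : 0 < ((τ / 2 : ℝ) : ℂ).re) Complex.I w

lemma gw_re (n : ℕ) (τ : ℝ) (w x : Euc n) :
    (Complex.exp (-((τ / 2 : ℝ) : ℂ) * (‖x‖ : ℂ) ^ 2 + Complex.I * ((⟪w, x⟫ : ℝ) : ℂ))).re =
      Real.exp (-(τ / 2) * ‖x‖ ^ 2) * Real.cos ⟪w, x⟫ := by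
  rw [Complex.exp_re]
  congr 2
  · have : -((τ / 2 : ℝ) : ℂ) * (‖x‖ : ℂ) ^ 2 + Complex.I * ((⟪w, x⟫ : ℝ) : ℂ) =
      ((-(τ / 2) * ‖x‖ ^ 2 : ℝ) : ℂ) + ((⟪w, x⟫ : ℝ) : ℂ) * Complex.I := by push_cast; ring
    rw [this]; simp only [Complex.add_re, Complex.ofReal_re, Complex.re_ofReal_mul]; simp
  · have : -((τ / 2 : ℝ) : ℂ) * (‖x‖ : ℂ) ^ 2 + Complex.I * ((⟪w, x⟫ : ℝ) : ℂ) =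
      ((-(τ / 2) * ‖x‖ ^ 2 : ℝ) : ℂ) + ((⟪w, x⟫ : ℝ) : ℂ) * Complex.I := by push_cast; ring
    rw [this]; simp only [Complex.add_im, Complex.ofReal_im, Complex.im_ofReal_mul]; simp

lemma gw_finite {n : ℕ} {τ : ℝ} (hτ : 0 < τ) : IsFiniteMeasure (gw n τ) := by
  refine isFiniteMeasure_withDensity_ofReal ?_
  have h := (gw_cint (n := n) hτ 0).re
  refine Integrable.hasFiniteIntegral (h.congr (Eventually.of_forall fun x => ?_))
  have := gw_re n τ 0 x
  simp only [inner_zero_left, Real.cos_zero, mul_one] at this ⊢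
  exact this

lemma gw_cos {n : ℕ} {τ : ℝ} (hτ : 0 < τ) :
    ∃ D : ℝ, 0 < D ∧ ∀ w : Euc n, ∫ x, Real.cos ⟪w, x⟫ ∂(gw n τ) =
      D * Real.exp (-‖w‖ ^ 2 / (2 * τ)) := by
  refine ⟨(π / (τ / 2)) ^ (Module.finrank ℝ (Euc n) / 2 : ℝ), by positivity, fun w => ?_⟩
  have h := GaussianFourier.integral_cexp_neg_mul_sq_norm_add
    (by simpa using hτ : 0 < ((τ / 2 : ℝ) : ℂ).re) Complex.I w
  rw [gw_integral]
  have h2 := congrArg Complex.re h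
  have h3 : ∀ f : Euc n → ℂ, Integrable f → (∫ x, f x).re = ∫ x, (f x).re := fun f hf =>
    (integral_re hf).symm
  rw [h3 _ (gw_cint hτ w)] at h2
  simp only [gw_re] at h2
  rw [h2]
  have e1 : ((π : ℂ) / ((τ / 2 : ℝ) : ℂ)) ^ ((Module.finrank ℝ (Euc n) : ℂ) / 2) =
      (((π / (τ / 2)) ^ (Module.finrank ℝ (Euc n) / 2 : ℝ) : ℝ) : ℂ) := by
    rw [Complex.ofReal_cpow (by positivity)]
    push_cast
    rfl
  have e2 : Complex.exp (Complex.I ^ 2 * (‖w‖ : ℂ) ^ 2 / (4 * ((τ / 2 : ℝ) : ℂ))) =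
      ((Real.exp (-‖w‖ ^ 2 / (2 * τ)) : ℝ) : ℂ) := by
    rw [Complex.ofReal_exp]
    congr 1
    push_cast
    rw [Complex.I_sq]
    ring
  rw [e1, e2, ← Complex.ofReal_mul, Complex.ofReal_re]

end PosDef

section Energy

variable {n : ℕ}

/-- The feature function `(cos⟨u,x⟩ + sin⟨u,x⟩)/2`. -/
def feat (u : Sph n) (x : Euc n) : ℝ :=
  (Real.cos ⟪(u : Euc n), x⟫ + Real.sin ⟪(u : Euc n), x⟫) / 2

lemma feat_continuous : Continuous (Function.uncurry (feat (n := n))) := by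
  unfold feat Function.uncurry
  fun_prop

lemma feat_bound (u : Sph n) (x : Euc n) : |feat u x| ≤ 1 := by
  unfold feat
  rw [abs_le]
  constructor <;>
  linarith [Real.cos_le_one ⟪(u : Euc n), x⟫, Real.sin_le_one ⟪(u : Euc n), x⟫,
    Real.neg_one_le_cos ⟪(u : Euc n), x⟫, Real.neg_one_le_sin ⟪(u : Euc n), x⟫]

lemma gw_sin (τ : ℝ) (w : Euc n) : ∫ x, Real.sin ⟪w, x⟫ ∂(gw n τ) = 0 := by
  rw [gw_integral]
  have h := integral_neg_eq_self (fun x : Euc n =>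
    Real.exp (-(τ / 2) * ‖x‖ ^ 2) * Real.sin ⟪w, x⟫) volume
  simp only [norm_neg, inner_neg_right, Real.sin_neg, mul_neg, integral_neg] at h
  linarith

/-- The exponential kernel as an integral of products of features. -/
lemma kernel_repr {τ : ℝ} (hτ : 0 < τ) :
    ∃ D : ℝ, 0 < D ∧ ∀ u v : Sph n, Real.exp (⟪(u : Euc n), (v : Euc n)⟫ / τ) =
      D * ∫ x, feat u x * feat v x ∂(gw n τ) := by
  obtain ⟨D, hD, hc⟩ := gw_cos (n := n) hτ
  have := gw_finite (n := n) hτ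
  refine ⟨4 * Real.exp (1 / τ) / D, by positivity, fun u v => ?_⟩
  have h1 : ∀ x, feat u x * feat v x = (1 / 4) * (Real.cos ⟪(u : Euc n) - v, x⟫ +
      Real.sin ⟪(u : Euc n) + v, x⟫) := by
    intro x
    rw [inner_sub_left, inner_add_left, Real.cos_sub, Real.sin_add]
    unfold feat
    ring
  simp only [h1]
  rw [integral_const_mul, integral_add, hc, gw_sin]
  · have h2 : -‖(u : Euc n) - v‖ ^ 2 / (2 * τ) = ⟪(u : Euc n), (v : Euc n)⟫ / τ - 1 / τ := by
      rw [norm_sub_sq_real]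
      simp only [norm_eq_of_mem_sphere]
      field_simp
      ring
    rw [h2, Real.exp_sub]
    field_simp
    ring
  · exact Integrable.of_bound (C := 1) (Continuous.aestronglyMeasurable (by fun_prop))
      (Eventually.of_forall fun x => Real.abs_cos_le_one _)
  · exact Integrable.of_bound (C := 1) (Continuous.aestronglyMeasurable (by fun_prop))
      (Eventually.of_forall fun x => Real.abs_sin_le_one _)

lemma eq_of_feat (μ ν : Measure (Sph n)) [IsProbabilityMeasure μ] [IsProbabilityMeasure ν]
    (h : ∀ x, ∫ u, feat u x ∂μ = ∫ u, feat u x ∂ν) : μ = ν := by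
  have hci : ∀ κ : Measure (Sph n), IsProbabilityMeasure κ → ∀ x : Euc n,
      Integrable (fun u : Sph n => Real.cos ⟪(u : Euc n), x⟫) κ := fun κ _ x =>
    Integrable.of_bound (C := 1) (Continuous.aestronglyMeasurable (by fun_prop))
      (Eventually.of_forall fun x => Real.abs_cos_le_one _)
  have hsi : ∀ κ : Measure (Sph n), IsProbabilityMeasure κ → ∀ x : Euc n,
      Integrable (fun u : Sph n => Real.sin ⟪(u : Euc n), x⟫) κ := fun κ _ x =>
    Integrable.of_bound (C := 1) (Continuous.aestronglyMeasurable (by fun_prop))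
      (Eventually.of_forall fun x => Real.abs_sin_le_one _)
  have hf : ∀ κ : Measure (Sph n), IsProbabilityMeasure κ → ∀ x : Euc n, ∫ u, feat u x ∂κ =
      ((∫ u : Sph n, Real.cos ⟪(u : Euc n), x⟫ ∂κ) +
        ∫ u : Sph n, Real.sin ⟪(u : Euc n), x⟫ ∂κ) / 2 := by
    intro κ hκ x
    rw [← integral_add (hci κ hκ x) (hsi κ hκ x), ← integral_div]
    rfl
  have hcs : ∀ x, (∫ u : Sph n, Real.cos ⟪(u : Euc n), x⟫ ∂μ) =
      (∫ u : Sph n, Real.cos ⟪(u : Euc n), x⟫ ∂ν) ∧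
      (∫ u : Sph n, Real.sin ⟪(u : Euc n), x⟫ ∂μ) =
      (∫ u : Sph n, Real.sin ⟪(u : Euc n), x⟫ ∂ν) := by
    intro x
    have h1 := h x
    have h2 := h (-x)
    rw [hf μ inferInstance, hf ν inferInstance] at h1 h2
    simp only [inner_neg_right, Real.cos_neg, Real.sin_neg, integral_neg] at h2
    constructor <;> linarith
  have hemb : MeasurableEmbedding (fun u : Sph n => (u : Euc n)) :=
    MeasurableEmbedding.subtype_coe Metric.isClosed_sphere.measurableSet
  have hchar : ∀ κ : Measure (Sph n), IsProbabilityMeasure κ → ∀ t,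
      charFun (κ.map (fun u : Sph n => (u : Euc n))) t =
      ((∫ u : Sph n, Real.cos ⟪(u : Euc n), t⟫ ∂κ : ℝ) : ℂ) +
        ((∫ u : Sph n, Real.sin ⟪(u : Euc n), t⟫ ∂κ : ℝ) : ℂ) * Complex.I := by
    intro κ hκ t
    rw [charFun_apply, hemb.integral_map]
    simp only [Complex.exp_mul_I]
    rw [← integral_complex_ofReal, ← integral_complex_ofReal, ← integral_mul_const,
      ← integral_add (hci κ hκ t).ofReal ((hsi κ hκ t).ofReal.mul_const _)]
    simp
  have hmap : μ.map (fun u : Sph n => (u : Euc n)) = ν.map (fun u : Sph n => (u : Euc n)) := by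
    have := Measure.isProbabilityMeasure_map (μ := μ) hemb.measurable.aemeasurable
    have := Measure.isProbabilityMeasure_map (μ := ν) hemb.measurable.aemeasurable
    apply Measure.ext_of_charFun
    ext t
    rw [hchar μ inferInstance, hchar ν inferInstance, (hcs t).1, (hcs t).2]
  rw [← hemb.comap_map μ, hmap, hemb.comap_map]

/-- The exponential kernel is strictly positive definite on probability measures. -/
lemma energy {τ : ℝ} (hτ : 0 < τ) (μ ν : Measure (Sph n)) [IsProbabilityMeasure μ]
    [IsProbabilityMeasure ν] :
    let E := fun α β : Measure (Sph n) =>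
      ∫ u : Sph n, ∫ v : Sph n, Real.exp (⟪(u : Euc n), (v : Euc n)⟫ / τ) ∂β ∂α
    0 ≤ E μ μ - 2 * E μ ν + E ν ν ∧ (E μ μ - 2 * E μ ν + E ν ν = 0 → μ = ν) := by
  obtain ⟨D, hD, hK⟩ := kernel_repr (n := n) hτ
  have := gw_finite (n := n) hτ
  obtain ⟨hi, he⟩ := pd_sq μ ν (gw n τ) feat feat_continuous.measurable feat_bound
  intro E
  have hE : E μ μ - 2 * E μ ν + E ν ν =
      D * ∫ y, ((∫ u, feat u y ∂μ) - (∫ v, feat v y ∂ν)) ^ 2 ∂(gw n τ) := by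
    rw [← he]
    simp only [E, hK, integral_const_mul]
    ring
  rw [hE]
  refine ⟨mul_nonneg hD.le (integral_nonneg fun y => sq_nonneg _), fun h0 => ?_⟩
  have h1 := (mul_eq_zero.1 h0).resolve_left hD.ne'
  have h2 := (integral_eq_zero_iff_of_nonneg (fun y => sq_nonneg _) hi).1 h1
  have hac : (volume : Measure (Euc n)) ≪ gw n τ :=
    withDensity_absolutelyContinuous' (by fun_prop)
      (Eventually.of_forall fun x => by simp [Real.exp_pos])
  have h3 : (fun y => ∫ u, feat u y ∂μ) =ᵐ[(volume : Measure (Euc n))]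
      fun y => ∫ u, feat u y ∂ν := by
    filter_upwards [hac.ae_le h2] with y hy
    exact sub_eq_zero.1 (pow_eq_zero_iff two_ne_zero |>.1 hy)
  have hcont : ∀ κ : Measure (Sph n), IsProbabilityMeasure κ →
      Continuous fun y => ∫ u, feat u y ∂κ := by
    intro κ _
    refine continuous_of_dominated (bound := fun _ => 1) (fun y => ?_)
      (fun y => Eventually.of_forall fun u => feat_bound u y) (integrable_const _)
      (Eventually.of_forall fun u => ?_)
    · have h : Continuous fun u : Sph n => feat u y := by unfold feat; fun_prop
      exact h.aestronglyMeasurable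
    · have h : Continuous fun y : Euc n => feat u y := by unfold feat; fun_prop
      exact h
  have h4 := (Continuous.ae_eq_iff_eq volume (hcont μ inferInstance) (hcont ν inferInstance)).1 h3
  exact eq_of_feat μ ν fun x => congrFun h4 x

end Energy

/-- For `d ≥ 1` and `τ > 0`, the uniform measure `σ_d` is the unique Borel
probability measure on `S^d` minimizing `μ ↦ ∫ log(∫ e^{u·v/τ} dμ(v)) dμ(u)`. -/
theorem uniform_unique_logPotFunctional_minimizer (d : ℕ) (hd : 1 ≤ d) (τ : ℝ) (hτ : 0 < τ)
    (μ : Measure (Sph (d + 1))) [IsProbabilityMeasure μ] :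
    logPotFunctional τ (unifSphere (d + 1)) ≤ logPotFunctional τ μ ∧
      (logPotFunctional τ μ = logPotFunctional τ (unifSphere (d + 1)) ↔
        μ = unifSphere (d + 1)) := by
  have hσ := unifSphere_prob d
  set σ := unifSphere (d + 1) with hσdef
  let K : Sph (d + 1) → Sph (d + 1) → ℝ := fun u v => Real.exp (⟪(u : Euc (d + 1)), (v : Euc (d + 1))⟫ / τ)
  have hKc : Continuous fun p : Sph (d + 1) × Sph (d + 1) => K p.1 p.2 := by
    simp only [K]
    fun_prop
  have hKp : ∀ u v, 0 < K u v := fun u v => Real.exp_pos _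
  have hKs : ∀ u v, K u v = K v u := fun u v => by simp only [K, real_inner_comm]
  have hne : Nonempty (Sph (d + 1)) := by
    by_contra h
    rw [not_nonempty_iff] at h
    have := hσ.measure_univ
    simp [Set.eq_empty_of_isEmpty] at this
  obtain ⟨x₀⟩ := hne
  set c := ∫ v, K x₀ v ∂σ with hc
  have hUσ : ∀ u, ∫ v, K u v ∂σ = c := fun u => unif_potential_const τ u x₀
  have hEσ : ∀ κ : Measure (Sph (d + 1)), IsProbabilityMeasure κ →
      ∫ u, ∫ v, K u v ∂σ ∂κ = c := by
    intro κ _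
    simp [hUσ]
  have hFσ : logPotFunctional τ σ = Real.log c := by
    change ∫ u, Real.log (∫ v, K u v ∂σ) ∂σ = Real.log c
    simp [hUσ]
  have hcp : 0 < c := by
    refine (integral_pos_iff_support_of_nonneg (fun v => (hKp _ v).le) ?_).2 ?_
    · exact (hKc.comp (by fun_prop : Continuous fun v => (x₀, v))).integrable_of_hasCompactSupport
        (.of_compactSpace _)
    · have : Function.support (fun v => K x₀ v) = Set.univ := by
        ext v; simp [(hKp x₀ v).ne']
      rw [this]
      simp
  have hE : ∀ κ : Measure (Sph (d + 1)), IsProbabilityMeasure κ →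
      c ≤ ∫ u, ∫ v, K u v ∂κ ∂κ ∧ (∫ u, ∫ v, K u v ∂κ ∂κ = c → κ = σ) := by
    intro κ hκ
    obtain ⟨h1, h2⟩ := energy hτ κ σ
    have e1 := hEσ κ hκ
    have e2 := hEσ σ hσ
    simp only [K] at e1 e2 h1 h2 ⊢
    rw [e1, e2] at h1 h2
    exact ⟨by linarith, fun h => h2 (by rw [h]; ring)⟩
  -- the minimum value is `log c`
  have hmain : ∀ κ : Measure (Sph (d + 1)), IsProbabilityMeasure κ →
      Real.log c ≤ logPotFunctional τ κ := by
    intro κ hκ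
    have : Nonempty (Sph (d + 1)) := ⟨x₀⟩
    obtain ⟨ρ, hρ⟩ := exists_min K hKc hKp
    have hval := min_value K hKc hKp hKs (ρ : Measure (Sph (d + 1))) fun ν hν => hρ ⟨ν, hν⟩
    have h1 := hρ ⟨κ, hκ⟩
    rw [hval] at h1
    exact (Real.log_le_log hcp (hE _ inferInstance).1).trans h1
  refine ⟨hFσ ▸ hmain μ inferInstance, fun h => ?_, fun h => by rw [h]⟩
  rw [hFσ] at h
  have hval := min_value K hKc hKp hKs μ fun ν hν => by
    have := hmain ν hν
    rw [← h] at this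
    exact this
  have hval' : Real.log c = Real.log (∫ u, ∫ v, K u v ∂μ ∂μ) := by
    rw [← hval, ← h]
    rfl
  have hle := (hE μ inferInstance).1
  refine (hE μ inferInstance).2 ?_
  exact (Real.log_injOn_pos (Set.mem_Ioi.2 hcp) (Set.mem_Ioi.2 (hcp.trans_le hle)) hval').symm
end
end
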